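/- Assume 0 < σ < ∞ if N ≤ 4 and 0 < σ < 4/(N-4) if N ≥ 5. The mapping c ↦ t(c) is strictly increasing on (0,∞), and there exists C > 0 such that t(c) ≤ C√c for all sufficiently small c > 0; in particular t(c) → 0 as c → 0. -/

import Mathlib

open MeasureTheory Filter Topology

noncomputable section

abbrev Esp (N : ℕ) := EuclideanSpace ℝ (Fin N)

/-- Smooth compactly supported test functions. -/
def TestFun {N : ℕ} (φ : Esp N → ℂ) : Prop :=
  ContDiff ℝ (⊤ : ℕ∞) φ ∧ HasCompactSupport φ

/-- Partial derivative in the `i`-th coordinate direction. -/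
def pderivC {N : ℕ} (i : Fin N) (φ : Esp N → ℂ) : Esp N → ℂ :=
  fun x => fderiv ℝ φ x (EuclideanSpace.single i (1 : ℝ))

/-- The Laplacian of a (smooth) function. -/
def lapC {N : ℕ} (φ : Esp N → ℂ) : Esp N → ℂ :=
  fun x => ∑ i, pderivC i (pderivC i φ) x

/-- `v` is the weak `i`-th partial derivative of `u`. -/
def IsWeakPDeriv {N : ℕ} (u : Esp N → ℂ) (i : Fin N) (v : Esp N → ℂ) : Prop :=
  ∀ φ : Esp N → ℂ, TestFun φ → ∫ x, u x * pderivC i φ x = - ∫ x, v x * φ x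

/-- `v` is the weak Laplacian of `u`. -/
def IsWeakLap {N : ℕ} (u v : Esp N → ℂ) : Prop :=
  ∀ φ : Esp N → ℂ, TestFun φ → ∫ x, u x * lapC φ x = ∫ x, v x * φ x

/-- An element of the Sobolev space `H²(ℝ^N, ℂ)`: an `L²` function together with its
weak partial derivatives and its weak Laplacian, all in `L²`. -/
structure H2 (N : ℕ) where
  u : Esp N → ℂ
  grad : Fin N → Esp N → ℂ
  lapl : Esp N → ℂ
  u_mem : MemLp u 2 (volume : Measure (Esp N))
  grad_mem : ∀ i, MemLp (grad i) 2 (volume : Measure (Esp N))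
  lapl_mem : MemLp lapl 2 (volume : Measure (Esp N))
  grad_spec : ∀ i, IsWeakPDeriv u i (grad i)
  lapl_spec : IsWeakLap u lapl

namespace H2

variable {N : ℕ}

/-- `∫ |u|²`. -/
def massSq (U : H2 N) : ℝ := ∫ x, ‖U.u x‖ ^ 2

/-- `∫ |∇u|²`. -/
def gradSq (U : H2 N) : ℝ := ∑ i, ∫ x, ‖U.grad i x‖ ^ 2

/-- `∫ |Δu|²`. -/
def lapSq (U : H2 N) : ℝ := ∫ x, ‖U.lapl x‖ ^ 2

/-- `∫ |u|^{2σ+2}`. -/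
def pPow (σ : ℝ) (U : H2 N) : ℝ := ∫ x, ‖U.u x‖ ^ (2 * σ + 2)

/-- The energy `E(u) = ∫|Δu|² - 2∫|∇u|² - (1/(σ+1))∫|u|^{2σ+2}`. -/
def energy (σ : ℝ) (U : H2 N) : ℝ :=
  U.lapSq - 2 * U.gradSq - (1 / (σ + 1)) * U.pPow σ

/-- The square of the `H²` norm. -/
def h2NormSq (U : H2 N) : ℝ := U.massSq + U.gradSq + U.lapSq

/-- `u` does not vanish almost everywhere. -/
def Nontriv (U : H2 N) : Prop := ¬ (U.u =ᵐ[(volume : Measure (Esp N))] 0)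

end H2

/-- `E_min(m) = inf {E(u) : u ∈ H², ∫|u|² = m}`, with values in `EReal`. -/
def EminE (N : ℕ) (σ m : ℝ) : EReal :=
  ⨅ (U : H2 N) (_ : U.massSq = m), ((U.energy σ : ℝ) : EReal)

/-- The `L^p` norm (as a real number) of a function on `ℝ^N`. -/
def rLp {N : ℕ} (p : ℝ) (f : Esp N → ℂ) : ℝ :=
  (eLpNorm f (ENNReal.ofReal p) (volume : Measure (Esp N))).toReal


/-- The best constant `B(N,σ)` in the Gagliardo–Nirenberg–Sobolev inequality
`‖u‖_{L^{2σ+2}}^{2σ+2} ≤ B ‖Δu‖_{L²}^{Nσ/2} ‖u‖_{L²}^{2+2σ-Nσ/2}`. -/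
def GNconst (N : ℕ) (σ : ℝ) : ℝ :=
  sSup {r : ℝ | ∃ U : H2 N, U.Nontriv ∧
    r = U.pPow σ /
      (rLp 2 U.lapl ^ ((N : ℝ) * σ / 2) * rLp 2 U.u ^ (2 + 2 * σ - (N : ℝ) * σ / 2))}

/-- `k* = (σ+1)^{1/σ} B(N,σ)^{-1/σ}`. -/
def kstar (N : ℕ) (σ : ℝ) : ℝ := (σ + 1) ^ (1 / σ) * GNconst N σ ^ (-(1 / σ))

/-- Strong `H²` convergence of `v k (· + xs k)` to `U`. -/
def H2TendstoTrans {N : ℕ} (v : ℕ → H2 N) (xs : ℕ → Esp N) (U : H2 N) : Prop :=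
  Tendsto (fun k => eLpNorm (fun x => (v k).u (x + xs k) - U.u x) 2
      (volume : Measure (Esp N))) atTop (nhds 0) ∧
  (∀ i, Tendsto (fun k => eLpNorm (fun x => (v k).grad i (x + xs k) - U.grad i x) 2
      (volume : Measure (Esp N))) atTop (nhds 0)) ∧
  Tendsto (fun k => eLpNorm (fun x => (v k).lapl (x + xs k) - U.lapl x) 2
      (volume : Measure (Esp N))) atTop (nhds 0)

/-- `u` is a weak (`H^{-2}`) solution of `Δ²u + 2Δu + (1+c)u - |u|^{2σ}u = 0`. -/
def SolvesSW {N : ℕ} (σ c : ℝ) (U : H2 N) : Prop :=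
  ∀ φ : Esp N → ℂ, TestFun φ →
    (∫ x, U.lapl x * lapC φ x) + 2 * (∫ x, U.lapl x * φ x) +
        ((1 + c : ℝ) : ℂ) * (∫ x, U.u x * φ x) -
        (∫ x, ((‖U.u x‖ ^ (2 * σ) : ℝ) : ℂ) * U.u x * φ x) = 0

/-- `T_c(u) = ∫|Δu|² - 2∫|∇u|² + (1+c)∫|u|²`. -/
def Tfun {N : ℕ} (c : ℝ) (U : H2 N) : ℝ := U.lapSq - 2 * U.gradSq + (1 + c) * U.massSq

/-- `t(c) = inf {T_c(u) : ∫|u|^{2σ+2} = 1}`. -/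
def tmin (N : ℕ) (σ c : ℝ) : ℝ := sInf {r : ℝ | ∃ U : H2 N, U.pPow σ = 1 ∧ r = Tfun c U}

/-- The action `S_c(u) = E(u) + (1+c)‖u‖_{L²}² = T_c(u) - (1/(σ+1))∫|u|^{2σ+2}`. -/
def action {N : ℕ} (σ c : ℝ) (U : H2 N) : ℝ := U.energy σ + (1 + c) * U.massSq


open scoped ENNReal

/-- Convolution of `f` with `φ`. -/
def cv {N : ℕ} (f φ : Esp N → ℂ) (x : Esp N) : ℂ := ∫ y, f y * φ (x - y)

lemma cv_meas {N : ℕ} {f φ : Esp N → ℂ} (hf : AEStronglyMeasurable f volume)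
    (hφ : Continuous φ) : AEStronglyMeasurable (cv f φ) volume := by
  have h : AEStronglyMeasurable (fun z : Esp N × Esp N => f z.2 * φ (z.1 - z.2))
      ((volume : Measure (Esp N)).prod volume) := by
    refine AEStronglyMeasurable.mul ?_ ?_
    · exact hf.comp_quasiMeasurePreserving Measure.quasiMeasurePreserving_snd
    · exact (hφ.comp (continuous_fst.sub continuous_snd)).aestronglyMeasurable
  exact h.integral_prod_right'

lemma lint_sub {N : ℕ} (F : Esp N → ℝ≥0∞) (x : Esp N) : ∫⁻ y, F (x - y) = ∫⁻ y, F y :=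
  lintegral_sub_left_eq_self F x

lemma eLpNorm_two_sq {N : ℕ} (f : Esp N → ℂ) :
    (eLpNorm f 2 volume) ^ 2 = ∫⁻ x, ‖f x‖ₑ ^ 2 := by
  rw [eLpNorm_eq_lintegral_rpow_enorm_toReal (by norm_num) (by norm_num)]
  rw [← ENNReal.rpow_natCast, ← ENNReal.rpow_mul]
  norm_num

lemma CS_lint {N : ℕ} {f g : Esp N → ℝ≥0∞} (hf : AEMeasurable f volume)
    (hg : AEMeasurable g volume) :
    (∫⁻ y, f y * g y) ^ 2 ≤ (∫⁻ y, f y ^ 2) * ∫⁻ y, g y ^ 2 := by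
  have h := ENNReal.lintegral_mul_le_Lp_mul_Lq (volume : Measure (Esp N))
    Real.HolderConjugate.two_two hf hg
  simp only [Pi.mul_apply, ENNReal.rpow_ofNat] at h
  calc (∫⁻ y, f y * g y) ^ 2 ≤ _ := pow_le_pow_left' h 2
    _ = _ := by
      rw [mul_pow, ← ENNReal.rpow_natCast, ← ENNReal.rpow_mul, ← ENNReal.rpow_natCast,
        ← ENNReal.rpow_mul]
      norm_num

lemma cv_enorm_le {N : ℕ} (f φ : Esp N → ℂ) (x : Esp N) :
    ‖cv f φ x‖ₑ ≤ ∫⁻ y, ‖f y‖ₑ * ‖φ (x - y)‖ₑ := by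
  refine (enorm_integral_le_lintegral_enorm _).trans (le_of_eq ?_)
  simp [enorm_mul]

lemma cv_sup {N : ℕ} {f φ : Esp N → ℂ} (hf : AEStronglyMeasurable f volume)
    (hφ : Continuous φ) (x : Esp N) :
    ‖cv f φ x‖ₑ ≤ eLpNorm f 2 volume * eLpNorm φ 2 volume := by
  rw [← ENNReal.pow_le_pow_left_iff two_ne_zero, mul_pow, eLpNorm_two_sq, eLpNorm_two_sq,
    ← lint_sub (fun y => ‖φ y‖ₑ ^ 2) x]
  refine (pow_le_pow_left' (cv_enorm_le f φ x) 2).trans (CS_lint hf.enorm ?_)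
  exact (hφ.comp (continuous_const.sub continuous_id)).enorm.measurable.aemeasurable

lemma cv_L2 {N : ℕ} {f φ : Esp N → ℂ} (hf : AEStronglyMeasurable f volume)
    (hφ : Continuous φ) :
    eLpNorm (cv f φ) 2 volume ≤ (∫⁻ y, ‖φ y‖ₑ) * eLpNorm f 2 volume := by
  rw [← ENNReal.pow_le_pow_left_iff two_ne_zero, mul_pow, eLpNorm_two_sq, eLpNorm_two_sq]
  have hm : ∀ x, Measurable fun y => ‖φ (x - y)‖ₑ := fun x =>
    (hφ.comp (continuous_const.sub continuous_id)).enorm.measurable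
  have key : ∀ x, ‖cv f φ x‖ₑ ^ 2 ≤ (∫⁻ y, ‖φ y‖ₑ) * ∫⁻ y, ‖f y‖ₑ ^ 2 * ‖φ (x - y)‖ₑ := by
    intro x
    have h1 : ∀ y, ‖f y‖ₑ * ‖φ (x - y)‖ₑ =
        (‖φ (x - y)‖ₑ ^ (1 / 2 : ℝ)) * (‖f y‖ₑ * ‖φ (x - y)‖ₑ ^ (1 / 2 : ℝ)) := by
      intro y
      rw [mul_left_comm, ← ENNReal.rpow_add_of_nonneg _ _ (by norm_num) (by norm_num)]
      norm_num
    have h2 : ∀ z : ℝ≥0∞, (z ^ (1 / 2 : ℝ)) ^ 2 = z := by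
      intro z
      rw [← ENNReal.rpow_natCast, ← ENNReal.rpow_mul]; norm_num
    refine (pow_le_pow_left' (cv_enorm_le f φ x) 2).trans ?_
    rw [lintegral_congr h1]
    refine (CS_lint ((hm x).pow_const _).aemeasurable
      (hf.enorm.mul ((hm x).pow_const _).aemeasurable)).trans ?_
    simp only [mul_pow, h2, Pi.mul_apply]
    rw [lint_sub (fun y => ‖φ y‖ₑ) x]
  refine (lintegral_mono key).trans ?_
  have hmeas : AEMeasurable (fun z : Esp N × Esp N => ‖f z.2‖ₑ ^ 2 * ‖φ (z.1 - z.2)‖ₑ)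
      ((volume : Measure (Esp N)).prod volume) := by
    refine AEMeasurable.mul (f := fun z : Esp N × Esp N => ‖f z.2‖ₑ ^ 2)
      (g := fun z : Esp N × Esp N => ‖φ (z.1 - z.2)‖ₑ) ?_ ?_
    · exact ((hf.comp_quasiMeasurePreserving Measure.quasiMeasurePreserving_snd).enorm).pow_const 2
    · exact ((hφ.comp (continuous_fst.sub continuous_snd)).enorm.measurable).aemeasurable
  rw [lintegral_const_mul'' _ hmeas.lintegral_prod_right', lintegral_lintegral_swap hmeas]
  have : ∀ y, ∫⁻ x, ‖f y‖ₑ ^ 2 * ‖φ (x - y)‖ₑ = ‖f y‖ₑ ^ 2 * ∫⁻ y, ‖φ y‖ₑ := by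
    intro y
    have hq : Measurable fun x => ‖φ (x - y)‖ₑ :=
      (hφ.comp (continuous_id.sub continuous_const)).enorm.measurable
    rw [lintegral_const_mul _ hq]
    congr 1
    exact lintegral_sub_right_eq_self (fun z => ‖φ z‖ₑ) y
  simp_rw [this]
  rw [lintegral_mul_const'' _ (hf.enorm.pow_const 2)]
  apply le_of_eq; ring

lemma interp {N : ℕ} {g : Esp N → ℂ} {S A p : ℝ} (hp : 2 < p) (hS : 0 ≤ S) (hA : 0 ≤ A)
    (h1 : ∀ x, ‖g x‖ₑ ≤ ENNReal.ofReal S) (h2 : eLpNorm g 2 volume ≤ ENNReal.ofReal A) :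
    eLpNorm g (ENNReal.ofReal p) volume ≤ ENNReal.ofReal (S ^ (1 - 2 / p) * A ^ (2 / p)) := by
  have hp0 : 0 < p := by linarith
  rw [eLpNorm_eq_lintegral_rpow_enorm_toReal (by simpa using hp0) (by simp),
    ENNReal.toReal_ofReal hp0.le]
  have : ∫⁻ x, ‖g x‖ₑ ^ p ≤ ENNReal.ofReal S ^ (p - 2) * ENNReal.ofReal A ^ 2 := by
    calc ∫⁻ x, ‖g x‖ₑ ^ p ≤ ∫⁻ x, ENNReal.ofReal S ^ (p - 2) * ‖g x‖ₑ ^ 2 := by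
          refine lintegral_mono fun x => ?_
          calc ‖g x‖ₑ ^ p = ‖g x‖ₑ ^ (p - 2) * ‖g x‖ₑ ^ (2 : ℝ) := by
                rw [← ENNReal.rpow_add_of_nonneg _ _ (by linarith) (by norm_num)]; congr 1; ring
            _ ≤ _ := by
                rw [ENNReal.rpow_ofNat]
                exact mul_le_mul_left (ENNReal.rpow_le_rpow (h1 x) (by linarith)) _
      _ = ENNReal.ofReal S ^ (p - 2) * ∫⁻ x, ‖g x‖ₑ ^ 2 := by
          rw [lintegral_const_mul' _ _ (ENNReal.rpow_ne_top_of_nonneg (by linarith) (by simp))]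
      _ ≤ _ := by
          rw [← eLpNorm_two_sq]; gcongr
  calc _ ≤ (ENNReal.ofReal S ^ (p - 2) * ENNReal.ofReal A ^ 2) ^ (1 / p) := by gcongr
    _ = _ := by
      rw [ENNReal.mul_rpow_of_nonneg _ _ (by positivity), ENNReal.ofReal_mul (by positivity),
        ← ENNReal.rpow_mul, ← ENNReal.rpow_ofNat, ← ENNReal.rpow_mul,
        ENNReal.ofReal_rpow_of_nonneg hS, ENNReal.ofReal_rpow_of_nonneg hA]
      · congr 3
        · field_simp
        · ring
      · positivity
      · apply mul_nonneg; linarith; positivity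

open scoped ContDiff

/-- Radial function with profile `G` in the variable `|x|²`. -/
def rad {N : ℕ} (G : ℝ → ℝ) (x : Esp N) : ℂ := ((G (‖x‖ ^ 2) : ℝ) : ℂ)

lemma rad_contDiff {N : ℕ} {G : ℝ → ℝ} (hG : ContDiff ℝ ∞ G) : ContDiff ℝ ∞ (rad (N := N) G) :=
  Complex.ofRealCLM.contDiff.comp (hG.comp (contDiff_norm_sq ℝ))

lemma rad_supp {N : ℕ} {G : ℝ → ℝ} {r : ℝ} (hr : 0 ≤ r) (h0 : ∀ s, r ^ 2 ≤ s → G s = 0) (x : Esp N)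
    (hx : x ∉ Metric.closedBall (0 : Esp N) r) : rad G x = 0 := by
  have : r < ‖x‖ := by simpa using hx
  simp only [rad]
  rw [h0 _ (by gcongr)]; simp

lemma rad_test {N : ℕ} {G : ℝ → ℝ} {r : ℝ} (hG : ContDiff ℝ ∞ G) (hr : 0 ≤ r)
    (h0 : ∀ s, r ^ 2 ≤ s → G s = 0) : TestFun (rad (N := N) G) :=
  ⟨rad_contDiff hG, HasCompactSupport.intro (isCompact_closedBall (0 : Esp N) r)
    fun x hx => rad_supp hr h0 x hx⟩

lemma rad_hasFDerivAt {N : ℕ} {G : ℝ → ℝ} (hG : ContDiff ℝ ∞ G) (x : Esp N) :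
    HasFDerivAt (fun x : Esp N => G (‖x‖ ^ 2))
      ((deriv G (‖x‖ ^ 2)) • ((2 : ℝ) • (innerSL ℝ x))) x := by
  have h1 : HasDerivAt G (deriv G (‖x‖ ^ 2)) (‖x‖ ^ 2) :=
    (hG.differentiable (by simp)).differentiableAt.hasDerivAt
  have h2 := (hasStrictFDerivAt_norm_sq x).hasFDerivAt
  have := h1.comp_hasFDerivAt x h2
  have e : (2 : ℕ) • (innerSL ℝ x : Esp N →L[ℝ] ℝ) = (2 : ℝ) • (innerSL ℝ x) := by
    ext; simp
  rw [e] at this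
  exact this

lemma pderiv_rad {N : ℕ} {G : ℝ → ℝ} (hG : ContDiff ℝ ∞ G) (i : Fin N) :
    pderivC i (rad (N := N) G) = fun x => ((2 * x i * deriv G (‖x‖ ^ 2) : ℝ) : ℂ) := by
  funext x
  have h := Complex.ofRealCLM.hasFDerivAt.comp x (rad_hasFDerivAt hG x)
  have h' : HasFDerivAt (rad G) _ x := h
  simp only [pderivC]
  rw [h'.fderiv]
  simp [EuclideanSpace.inner_single_right]
  ring

lemma lap_rad {N : ℕ} {G : ℝ → ℝ} (hG : ContDiff ℝ ∞ G) (x : Esp N) :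
    lapC (rad (N := N) G) x =
      ((4 * ‖x‖ ^ 2 * deriv (deriv G) (‖x‖ ^ 2) + 2 * N * deriv G (‖x‖ ^ 2) : ℝ) : ℂ) := by
  have hG' : ContDiff ℝ ∞ (deriv G) := (contDiff_infty_iff_deriv.1 hG).2
  have key : ∀ i : Fin N, pderivC i (pderivC i (rad (N := N) G)) x =
      ((4 * (x i) ^ 2 * deriv (deriv G) (‖x‖ ^ 2) + 2 * deriv G (‖x‖ ^ 2) : ℝ) : ℂ) := by
    intro i
    rw [pderiv_rad hG]
    have hc : HasFDerivAt (fun x : Esp N => 2 * x i)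
        ((2 : ℝ) • (EuclideanSpace.proj i : Esp N →L[ℝ] ℝ)) x :=
      ((EuclideanSpace.proj i : Esp N →L[ℝ] ℝ).hasFDerivAt).const_mul 2
    have h := Complex.ofRealCLM.hasFDerivAt.comp x (hc.mul (rad_hasFDerivAt hG' x))
    have h' : HasFDerivAt (fun x : Esp N => ((2 * x i * deriv G (‖x‖ ^ 2) : ℝ) : ℂ)) _ x := h
    simp only [pderivC]
    rw [h'.fderiv]
    simp [EuclideanSpace.inner_single_right]
    ring
  simp only [lapC]
  rw [Finset.sum_congr rfl fun i _ => key i, ← Complex.ofReal_sum]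
  congr 1
  rw [Finset.sum_add_distrib, ← Finset.sum_mul, ← Finset.mul_sum, EuclideanSpace.norm_sq_eq]
  simp
  ring

/-- Averaging of the profile over dilations. -/
def kap (w G : ℝ → ℝ) (s : ℝ) : ℝ := ∫ c in (1 : ℝ)..2, w c * G (c ^ 2 * s)

lemma kap_hasDerivAt {w G : ℝ → ℝ} (hw : Continuous w) (hG : ContDiff ℝ ∞ G) (s : ℝ) :
    HasDerivAt (kap w G) (kap (fun c => w c * c ^ 2) (deriv G) s) s := by
  have hG' : Continuous (deriv G) := (contDiff_infty_iff_deriv.1 hG).2.continuous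
  have hGc := hG.continuous
  obtain ⟨B, hB⟩ := ((isCompact_Icc (a := (1 : ℝ)) (b := 2)).prod
    (isCompact_closedBall s 1)).exists_bound_of_continuousOn
    (f := fun z : ℝ × ℝ => w z.1 * z.1 ^ 2 * deriv G (z.1 ^ 2 * z.2))
    (Continuous.continuousOn (by fun_prop))
  refine (intervalIntegral.hasDerivAt_integral_of_dominated_loc_of_deriv_le
    (F := fun s c => w c * G (c ^ 2 * s))
    (F' := fun s c => w c * c ^ 2 * deriv G (c ^ 2 * s)) (bound := fun _ => B)
    (Metric.closedBall_mem_nhds s one_pos) ?_ ?_ ?_ ?_ ?_ ?_).2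
  · exact Eventually.of_forall fun x => (by fun_prop : Continuous _).aestronglyMeasurable
  · exact (by fun_prop : Continuous _).intervalIntegrable _ _
  · exact (by fun_prop : Continuous _).aestronglyMeasurable
  · refine Eventually.of_forall fun t ht x hx => hB (t, x) ⟨?_, hx⟩
    rw [Set.uIoc_of_le (by norm_num)] at ht
    exact ⟨ht.1.le, ht.2⟩
  · exact continuous_const.intervalIntegrable _ _
  · refine Eventually.of_forall fun t _ x _ => ?_
    have h1 : HasDerivAt G (deriv G (t ^ 2 * x)) (t ^ 2 * x) :=
      (hG.differentiable (by simp)).differentiableAt.hasDerivAt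
    have h2 : HasDerivAt (fun x : ℝ => t ^ 2 * x) (t ^ 2) x := by
      simpa using (hasDerivAt_id x).const_mul (t ^ 2)
    have h3 := (h1.comp x h2).const_mul (w t)
    refine h3.congr_deriv ?_
    ring

lemma kap_deriv {w G : ℝ → ℝ} (hw : Continuous w) (hG : ContDiff ℝ ∞ G) :
    deriv (kap w G) = kap (fun c => w c * c ^ 2) (deriv G) :=
  funext fun s => (kap_hasDerivAt hw hG s).deriv

lemma kap_contDiff {w G : ℝ → ℝ} (hw : Continuous w) (hG : ContDiff ℝ ∞ G) :
    ContDiff ℝ ∞ (kap w G) := by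
  rw [contDiff_infty]
  intro n
  induction n generalizing w G with
  | zero =>
    have : Differentiable ℝ (kap w G) := fun s => (kap_hasDerivAt hw hG s).differentiableAt
    simpa using this.continuous
  | succ n ih =>
    push_cast
    rw [contDiff_succ_iff_deriv]
    refine ⟨fun s => (kap_hasDerivAt hw hG s).differentiableAt, by simp, ?_⟩
    rw [kap_deriv hw hG]
    exact ih (by fun_prop) (contDiff_infty_iff_deriv.1 hG).2

lemma kap_zero {w G : ℝ → ℝ} {r s : ℝ} (h0 : ∀ s, r ≤ s → G s = 0) (hr : 0 ≤ r) (hs : r ≤ s) :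
    kap w G s = 0 := by
  rw [kap, intervalIntegral.integral_congr (g := fun _ => (0 : ℝ))]
  · simp
  intro c hc
  rw [Set.uIcc_of_le (by norm_num)] at hc
  have : G (c ^ 2 * s) = 0 := h0 _ (by nlinarith [hc.1, mul_nonneg (sub_nonneg.2 hc.1) hr])
  simp [this]

/-- The weight `c^{N-3}`. -/
def wN (N : ℕ) (c : ℝ) : ℝ := c ^ N / (max c 1) ^ 3

lemma wN_cont (N : ℕ) : Continuous (wN N) := by
  unfold wN
  refine Continuous.div (by fun_prop) (by fun_prop) fun c => ?_
  have : (1 : ℝ) ≤ max c 1 := le_max_right _ _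
  positivity

lemma kap_identity (N : ℕ) {G : ℝ → ℝ} (hG : ContDiff ℝ ∞ G) (s : ℝ) :
    4 * s * deriv (deriv (kap (wN N) G)) s + 2 * N * deriv (kap (wN N) G) s =
      2 * 2 ^ N * deriv G (4 * s) - 2 * deriv G s := by
  have hG' : ContDiff ℝ ∞ (deriv G) := (contDiff_infty_iff_deriv.1 hG).2
  have hG'' : ContDiff ℝ ∞ (deriv (deriv G)) := (contDiff_infty_iff_deriv.1 hG').2
  have c1 := hG'.continuous
  have c2 := hG''.continuous
  have cw := wN_cont N
  rw [kap_deriv (wN_cont N) hG, kap_deriv (by fun_prop) hG', kap, kap,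
    ← intervalIntegral.integral_const_mul, ← intervalIntegral.integral_const_mul,
    ← intervalIntegral.integral_add ((by fun_prop : Continuous _).intervalIntegrable _ _)
      ((by fun_prop : Continuous _).intervalIntegrable _ _)]
  have := intervalIntegral.integral_eq_sub_of_hasDerivAt (a := 1) (b := 2)
    (f := fun c : ℝ => 2 * c ^ N * deriv G (c ^ 2 * s))
    (f' := fun c => 4 * s * (wN N c * c ^ 2 * c ^ 2 * deriv (deriv G) (c ^ 2 * s)) +
      2 * N * (wN N c * c ^ 2 * deriv G (c ^ 2 * s))) ?_
      ((by fun_prop : Continuous _).intervalIntegrable _ _)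
  · rw [this]; norm_num
  intro c hc
  rw [Set.uIcc_of_le (by norm_num)] at hc
  have hc0 : 0 < c := by linarith [hc.1]
  have h1 : HasDerivAt (deriv G) (deriv (deriv G) (c ^ 2 * s)) (c ^ 2 * s) :=
      (hG'.differentiable (by simp)).differentiableAt.hasDerivAt
  have h2 : HasDerivAt (fun c : ℝ => c ^ 2 * s) (2 * c * s) c := by
    simpa using (hasDerivAt_pow 2 c).mul_const s
  have h3 := ((hasDerivAt_pow N c).const_mul 2).mul (h1.comp c h2)
  refine h3.congr_deriv ?_
  simp only [wN, max_eq_left hc.1, Function.comp]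
  rcases N with _ | n
  · field_simp; push_cast; ring
  · simp only [Nat.add_sub_cancel, pow_succ]
    field_simp; ring

open scoped ContDiff ENNReal

/-- Cut-off profile. -/
def h0 (s : ℝ) : ℝ := Real.smoothTransition (2 - s)

lemma h0_smooth : ContDiff ℝ ∞ h0 := Real.smoothTransition.contDiff.comp (by fun_prop)
lemma h0_nonneg (s : ℝ) : 0 ≤ h0 s := Real.smoothTransition.nonneg _
lemma h0_le (s : ℝ) : h0 s ≤ 1 := Real.smoothTransition.le_one _
lemma h0_zero {s : ℝ} (hs : 4 ≤ s) : h0 s = 0 :=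
  Real.smoothTransition.zero_of_nonpos (by linarith)

/-- Normalization constant. -/
def Z0 (N : ℕ) : ℝ := ∫ x : Esp N, h0 (‖x‖ ^ 2)

lemma h0_norm_cont (N : ℕ) : Continuous (fun x : Esp N => h0 (‖x‖ ^ 2)) :=
  h0_smooth.continuous.comp (by fun_prop)

lemma h0_norm_comp (N : ℕ) : HasCompactSupport (fun x : Esp N => h0 (‖x‖ ^ 2)) := by
  refine HasCompactSupport.intro (isCompact_closedBall (0 : Esp N) 2) fun x hx => h0_zero ?_
  have : 2 < ‖x‖ := by simpa using hx
  nlinarith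

lemma Z0_pos (N : ℕ) : 0 < Z0 N := by
  refine (h0_norm_cont N).integral_pos_of_hasCompactSupport_nonneg_nonzero (h0_norm_comp N)
    (fun x => h0_nonneg _) (x := 0) ?_
  simp only [norm_zero, h0]
  rw [Real.smoothTransition.one_of_one_le (by norm_num)]
  exact one_ne_zero

/-- Primitive of the cut-off profile. -/
def g0 (N : ℕ) (s : ℝ) : ℝ := (2 * Z0 N)⁻¹ * ∫ t in (4 : ℝ)..s, h0 t

lemma g0_hasDerivAt (N : ℕ) (s : ℝ) : HasDerivAt (g0 N) ((2 * Z0 N)⁻¹ * h0 s) s :=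
  (intervalIntegral.integral_hasDerivAt_right
    (h0_smooth.continuous.intervalIntegrable _ _)
    (h0_smooth.continuous.stronglyMeasurableAtFilter _ _) h0_smooth.continuous.continuousAt).const_mul _

lemma g0_deriv (N : ℕ) : deriv (g0 N) = fun s => (2 * Z0 N)⁻¹ * h0 s :=
  funext fun s => (g0_hasDerivAt N s).deriv

lemma g0_smooth (N : ℕ) : ContDiff ℝ ∞ (g0 N) := by
  rw [contDiff_infty_iff_deriv, g0_deriv]
  exact ⟨fun s => (g0_hasDerivAt N s).differentiableAt, contDiff_const.mul h0_smooth⟩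

lemma g0_zero (N : ℕ) {s : ℝ} (hs : 4 ≤ s) : g0 N s = 0 := by
  rw [g0, intervalIntegral.integral_congr (g := fun _ => (0 : ℝ))]
  · simp
  intro c hc
  rw [Set.uIcc_of_le hs] at hc
  exact h0_zero hc.1

/-- Mollifier. -/
def ee (N k : ℕ) (x : Esp N) : ℝ := (2 ^ k) ^ N * (h0 (4 ^ k * ‖x‖ ^ 2) / Z0 N)

/-- Complex mollifier. -/
def eta (N k : ℕ) (x : Esp N) : ℂ := (ee N k x : ℂ)

/-- Profile of the kernel. -/
def kp (N k : ℕ) (s : ℝ) : ℝ := (2 ^ k) ^ N / 4 ^ k * kap (wN N) (g0 N) (4 ^ k * s)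

/-- Kernel whose Laplacian is the difference of consecutive mollifiers. -/
def KK (N k : ℕ) : Esp N → ℂ := rad (kp N k)

lemma four_pow_aux (k : ℕ) : (4 : ℝ) ^ k = (2 ^ k) ^ 2 := by
  rw [← pow_mul, mul_comm, pow_mul]; norm_num

lemma rad_aux (k : ℕ) {s : ℝ} (hs : (2 / 2 ^ k) ^ 2 ≤ s) : (4 : ℝ) ≤ 4 ^ k * s := by
  rw [four_pow_aux]
  rw [div_pow, div_le_iff₀ (by positivity)] at hs
  linarith

lemma eta_test (N k : ℕ) : TestFun (eta N k) := by
  refine rad_test (N := N) (G := fun s => (2 ^ k) ^ N * (h0 (4 ^ k * s) / Z0 N))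
    (r := 2 / 2 ^ k) ?_ (by positivity) ?_
  · have := h0_smooth
    exact contDiff_const.mul ((this.comp (by fun_prop)).div_const _)
  · intro s hs
    simp [h0_zero (rad_aux k hs)]

lemma kap0_smooth (N : ℕ) : ContDiff ℝ ∞ (kap (wN N) (g0 N)) :=
  kap_contDiff (wN_cont N) (g0_smooth N)

lemma kp_smooth (N k : ℕ) : ContDiff ℝ ∞ (kp N k) :=
  contDiff_const.mul ((kap0_smooth N).comp (by fun_prop))

lemma kp_zero (N k : ℕ) {s : ℝ} (hs : (2 / 2 ^ k) ^ 2 ≤ s) : kp N k s = 0 := by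
  have : kap (wN N) (g0 N) (4 ^ k * s) = 0 :=
    kap_zero (r := 4) (fun s hs => g0_zero N hs) (by norm_num) (rad_aux k hs)
  simp [kp, this]

lemma KK_test (N k : ℕ) : TestFun (KK N k) :=
  rad_test (kp_smooth N k) (by positivity) fun _ hs => kp_zero N k hs

lemma KK_lap (N k : ℕ) (x : Esp N) : lapC (KK N k) x = eta N (k + 1) x - eta N k x := by
  rw [KK, lap_rad (kp_smooth N k)]
  simp only [eta]
  rw [← Complex.ofReal_sub]
  congr 1
  set s := ‖x‖ ^ 2 with hs
  have hd : ∀ {F : ℝ → ℝ}, ContDiff ℝ ∞ F → ∀ C : ℝ,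
      deriv (fun s => C * F (4 ^ k * s)) = fun s => (C * 4 ^ k) * deriv F (4 ^ k * s) := by
    intro F hF C
    funext s
    have h1 : HasDerivAt F (deriv F (4 ^ k * s)) (4 ^ k * s) :=
      (hF.differentiable (by simp)).differentiableAt.hasDerivAt
    have h2 : HasDerivAt (fun x : ℝ => 4 ^ k * x) (4 ^ k) s := by
      simpa using (hasDerivAt_id s).const_mul (4 ^ k)
    have h3 : HasDerivAt (fun s => C * F (4 ^ k * s)) _ s := (h1.comp s h2).const_mul C
    rw [h3.deriv]; ring
  have h1 := kap_identity N (g0_smooth N) (4 ^ k * s)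
  have hk : kp N k = fun s => (2 ^ k) ^ N / 4 ^ k * kap (wN N) (g0 N) (4 ^ k * s) := rfl
  rw [hk, hd (kap0_smooth N), hd (contDiff_infty_iff_deriv.1 (kap0_smooth N)).2]
  rw [g0_deriv] at h1
  have hZ := (Z0_pos N).ne'
  have h4 : (4 : ℝ) ^ k ≠ 0 := by positivity
  simp only [ee]
  rw [← hs]
  have e1 : (4 : ℝ) ^ (k + 1) * s = 4 * (4 ^ k * s) := by ring
  have e2 : ((2 : ℝ) ^ (k + 1)) ^ N = 2 ^ N * (2 ^ k) ^ N := by rw [pow_succ, mul_pow]; ring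
  rw [e1, e2]
  have e3 : (2 ^ k : ℝ) ^ N / 4 ^ k * 4 ^ k = (2 ^ k) ^ N := by field_simp
  rw [e3]
  calc _ = (2 ^ k) ^ N * (4 * (4 ^ k * s) * deriv (deriv (kap (wN N) (g0 N))) (4 ^ k * s) +
      2 * N * deriv (kap (wN N) (g0 N)) (4 ^ k * s)) := by ring
    _ = _ := by rw [h1]; field_simp

lemma ee_nonneg (N k : ℕ) (x : Esp N) : 0 ≤ ee N k x := by
  have := (Z0_pos N).le
  have := h0_nonneg (4 ^ k * ‖x‖ ^ 2)
  unfold ee; positivity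

lemma ee_le (N k : ℕ) (x : Esp N) : ee N k x ≤ (Z0 N)⁻¹ * (2 ^ k) ^ N := by
  have h1 := Z0_pos N
  have := h0_le (4 ^ k * ‖x‖ ^ 2)
  unfold ee
  rw [mul_comm, div_eq_inv_mul]
  gcongr
  exact mul_le_of_le_one_right (by positivity) this

lemma ee_zero (N k : ℕ) (x : Esp N) (hx : x ∉ Metric.closedBall (0 : Esp N) (2 / 2 ^ k)) :
    ee N k x = 0 := by
  have : 2 / 2 ^ k < ‖x‖ := by simpa using hx
  simp [ee, h0_zero (rad_aux k (s := ‖x‖ ^ 2) (by gcongr))]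

lemma ee_int (N k : ℕ) : ∫ x, ee N k x = 1 := by
  have h : ∀ x : Esp N, ee N k x = (2 ^ k) ^ N / Z0 N * h0 (‖(2 ^ k : ℝ) • x‖ ^ 2) := by
    intro x
    rw [norm_smul, mul_pow, ee, four_pow_aux]
    simp; ring
  simp_rw [h]
  rw [integral_const_mul, Measure.integral_comp_smul volume (fun x : Esp N => h0 (‖x‖ ^ 2))]
  have := (Z0_pos N).ne'
  simp only [finrank_euclideanSpace, Fintype.card_fin, smul_eq_mul]
  rw [abs_of_nonneg (by positivity)]
  change _ * (_ * Z0 N) = 1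
  field_simp

lemma KK_bound (N : ℕ) : ∃ B : ℝ, 0 ≤ B ∧ ∀ k x, ‖KK N k x‖ ≤ B * (2 ^ k) ^ N / 4 ^ k := by
  obtain ⟨B, hB⟩ := (isCompact_Icc (a := (0 : ℝ)) (b := 4)).exists_bound_of_continuousOn
    (kap0_smooth N).continuous.continuousOn
  have hB0 : 0 ≤ B := (norm_nonneg _).trans (hB 0 (by simp))
  refine ⟨B, hB0, fun k x => ?_⟩
  simp only [KK, rad, kp]
  rw [Complex.norm_real, norm_mul, Real.norm_of_nonneg (by positivity)]
  have : ‖kap (wN N) (g0 N) (4 ^ k * ‖x‖ ^ 2)‖ ≤ B := by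
    by_cases h : 4 ^ k * ‖x‖ ^ 2 ≤ 4
    · exact hB _ ⟨by positivity, h⟩
    · rw [kap_zero (r := 4) (fun s hs => g0_zero N hs) (by norm_num) (not_le.1 h).le]
      simpa using hB0
  calc _ ≤ (2 ^ k) ^ N / 4 ^ k * B := by gcongr
    _ = _ := by ring

lemma KK_zero (N k : ℕ) (x : Esp N) (hx : x ∉ Metric.closedBall (0 : Esp N) (2 / 2 ^ k)) :
    KK N k x = 0 :=
  rad_supp (by positivity) (fun _ hs => kp_zero N k hs) x hx

/-- Volume of the unit ball. -/
def V0 (N : ℕ) : ℝ := (volume (Metric.ball (0 : Esp N) 1)).toReal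

lemma V0_pos (N : ℕ) : 0 < V0 N :=
  ENNReal.toReal_pos (Metric.measure_ball_pos _ _ one_pos).ne' measure_ball_lt_top.ne

lemma vol_cball (N : ℕ) {r : ℝ} (hr : 0 ≤ r) (x : Esp N) :
    volume (Metric.closedBall x r) = ENNReal.ofReal (r ^ N * V0 N) := by
  rw [Measure.addHaar_closedBall _ _ hr, ENNReal.ofReal_mul (by positivity), V0,
    ENNReal.ofReal_toReal measure_ball_lt_top.ne]
  simp

lemma L1_bound {N : ℕ} {φ : Esp N → ℂ} {b r : ℝ} (hr : 0 ≤ r) (hb : 0 ≤ b)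
    (h : ∀ x, ‖φ x‖ ≤ b) (h0 : ∀ x, x ∉ Metric.closedBall (0 : Esp N) r → φ x = 0) :
    ∫⁻ x, ‖φ x‖ₑ ≤ ENNReal.ofReal (b * (r ^ N * V0 N)) := by
  calc ∫⁻ x, ‖φ x‖ₑ ≤ ∫⁻ x, (Metric.closedBall (0 : Esp N) r).indicator
        (fun _ => ENNReal.ofReal b) x := by
        refine lintegral_mono fun x => ?_
        by_cases hx : x ∈ Metric.closedBall (0 : Esp N) r
        · rw [Set.indicator_of_mem hx, ← ofReal_norm]
          exact ENNReal.ofReal_le_ofReal (h x)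
        · simp [h0 x hx]
    _ = _ := by
        rw [lintegral_indicator Metric.isClosed_closedBall.measurableSet, lintegral_const,
          Measure.restrict_apply_univ, vol_cball N hr, ENNReal.ofReal_mul hb]

lemma L2_bound {N : ℕ} {φ : Esp N → ℂ} {b r : ℝ} (hr : 0 ≤ r) (hb : 0 ≤ b)
    (h : ∀ x, ‖φ x‖ ≤ b) (h0 : ∀ x, x ∉ Metric.closedBall (0 : Esp N) r → φ x = 0) :
    eLpNorm φ 2 volume ≤ ENNReal.ofReal (b * Real.sqrt (r ^ N * V0 N)) := by
  have hV := (V0_pos N).le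
  rw [← ENNReal.pow_le_pow_left_iff two_ne_zero, eLpNorm_two_sq,
    ← ENNReal.ofReal_pow (by positivity), mul_pow, Real.sq_sqrt (by positivity)]
  have := L1_bound (φ := fun x => φ x ^ 2) (b := b ^ 2) hr (by positivity)
    (fun x => by rw [norm_pow]; gcongr; exact h x) (fun x hx => by simp [h0 x hx])
  simpa [enorm_pow] using this

lemma cv_ae_tendsto {N : ℕ} {f : Esp N → ℂ} (hf : LocallyIntegrable f volume) :
    ∀ᵐ x, Tendsto (fun k => cv f (eta N k) x) atTop (𝓝 (f x)) := by
  filter_upwards [(Besicovitch.vitaliFamily (volume : Measure (Esp N))).ae_tendsto_average_norm_sub hf] with x₀ hx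
  have hr : Tendsto (fun k : ℕ => (2 / 2 ^ k : ℝ)) atTop (𝓝[>] 0) := by
    refine tendsto_nhdsWithin_iff.2 ⟨?_, Eventually.of_forall fun k => by
      simp only [Set.mem_Ioi]; positivity⟩
    have := (tendsto_pow_atTop_nhds_zero_of_lt_one (r := (1 / 2 : ℝ)) (by norm_num)
      (by norm_num)).const_mul 2
    simpa [div_eq_mul_inv] using this
  have h1 := (hx.comp (Besicovitch.tendsto_filterAt volume x₀)).comp hr
  have := tendsto_integral_smul_of_tendsto_average_norm_sub
    (g := fun k y => ee N k (x₀ - y)) ((Z0 N)⁻¹ * (2 ^ N * V0 N)) h1 ?_ ?_ ?_ ?_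
  · refine this.congr fun k => ?_
    simp only [cv, eta, Complex.real_smul, mul_comm]
  · exact Eventually.of_forall fun k => hf.integrableOn_isCompact (isCompact_closedBall _ _)
  · refine tendsto_const_nhds.congr fun k => ?_
    rw [integral_sub_left_eq_self (fun y => ee N k y) volume x₀, ee_int]
  · refine Eventually.of_forall fun k y hy => ?_
    by_contra hc
    refine hy (ee_zero N k _ fun hm => hc ?_)
    simpa [dist_eq_norm, norm_sub_rev] using hm
  · refine Eventually.of_forall fun k y => ?_
    rw [abs_of_nonneg (ee_nonneg _ _ _)]
    refine (ee_le N k _).trans (le_of_eq ?_)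
    have hV := V0_pos N
    simp only [Measure.real]
    rw [vol_cball N (by positivity), ENNReal.toReal_ofReal (by positivity), div_pow]
    field_simp

lemma TestFun.pd {N : ℕ} {φ : Esp N → ℂ} (h : TestFun φ) (i : Fin N) : TestFun (pderivC i φ) := by
  refine ⟨?_, ?_⟩
  · have : ContDiff ℝ (⊤ : ℕ∞) (fderiv ℝ φ) := h.1.fderiv_right (by norm_cast)
    exact this.clm_apply contDiff_const
  · exact h.2.fderiv_apply ℝ _

lemma TestFun.diff {N : ℕ} {φ : Esp N → ℂ} (h : TestFun φ) : Differentiable ℝ φ :=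
  h.1.differentiable (by norm_num)

lemma TestFun.cont {N : ℕ} {φ : Esp N → ℂ} (h : TestFun φ) : Continuous φ := h.1.continuous

lemma TestFun.reflect {N : ℕ} {φ : Esp N → ℂ} (h : TestFun φ) (x : Esp N) :
    TestFun (fun y => φ (x - y)) := by
  refine ⟨h.1.comp (contDiff_const.sub contDiff_id), ?_⟩
  exact h.2.comp_homeomorph (Homeomorph.subLeft x)

lemma pd_reflect {N : ℕ} {φ : Esp N → ℂ} (h : TestFun φ) (x : Esp N) (i : Fin N) :
    pderivC i (fun y => φ (x - y)) = fun y => - pderivC i φ (x - y) := by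
  funext y
  have h1 : HasFDerivAt (fun y => x - y) (-(ContinuousLinearMap.id ℝ (Esp N))) y := by
    simpa using (hasFDerivAt_id y).const_sub x
  have h2 := (h.diff (x - y)).hasFDerivAt.comp y h1
  unfold pderivC
  have h3 : fderiv ℝ (fun y => φ (x - y)) y = _ := h2.fderiv
  rw [h3]
  simp

lemma pd_neg {N : ℕ} (φ : Esp N → ℂ) (i : Fin N) (y : Esp N) :
    pderivC i (fun y => - φ y) y = - pderivC i φ y := by
  unfold pderivC
  rw [fderiv_fun_neg]; simp

lemma lap_reflect {N : ℕ} {φ : Esp N → ℂ} (h : TestFun φ) (x y : Esp N) :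
    lapC (fun y => φ (x - y)) y = lapC φ (x - y) := by
  unfold lapC
  refine Finset.sum_congr rfl fun i _ => ?_
  rw [pd_reflect h, pd_neg, pd_reflect (h.pd i)]
  simp

lemma TestFun.lap {N : ℕ} {φ : Esp N → ℂ} (h : TestFun φ) : TestFun (lapC φ) := by
  have : lapC φ = ∑ i, pderivC i (pderivC i φ) := by
    funext x; simp [lapC]
  rw [this]
  refine ⟨?_, ?_⟩
  · have : ContDiff ℝ (⊤ : ℕ∞) (fun x => ∑ i, pderivC i (pderivC i φ) x) :=
      ContDiff.sum fun i _ => ((h.pd i).pd i).1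
    convert this using 1
    funext x; simp
  · exact HasCompactSupport.finset_sum fun i _ => ((h.pd i).pd i).2

lemma TestFun.memLp {N : ℕ} {φ : Esp N → ℂ} (h : TestFun φ) (p : ENNReal) :
    MemLp φ p (volume : Measure (Esp N)) := h.cont.memLp_of_hasCompactSupport h.2

lemma TestFun.l1 {N : ℕ} {φ : Esp N → ℂ} (h : TestFun φ) : (∫⁻ y, ‖φ y‖ₑ) < ⊤ :=
  (h.cont.integrable_of_hasCompactSupport h.2).2

lemma cv_integrable {N : ℕ} {f φ : Esp N → ℂ} (hf : MemLp f 2 volume) (h : TestFun φ)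
    (x : Esp N) : Integrable (fun y => f y * φ (x - y)) volume :=
  hf.integrable_mul ((h.reflect x).memLp 2)

lemma cv_lap {N : ℕ} {u v φ : Esp N → ℂ} (h : IsWeakLap u v) (hφ : TestFun φ) (x : Esp N) :
    cv u (lapC φ) x = cv v φ x := by
  have := h _ (hφ.reflect x)
  simp only [lap_reflect hφ] at this
  exact this

lemma cv_pd {N : ℕ} {u v φ : Esp N → ℂ} {i : Fin N} (h : IsWeakPDeriv u i v) (hφ : TestFun φ)
    (x : Esp N) : cv u (pderivC i φ) x = cv v φ x := by
  have := h _ (hφ.reflect x)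
  simp only [pd_reflect hφ, mul_neg, integral_neg] at this
  exact neg_injective this

lemma cv_div {N : ℕ} (U : H2 N) {φ : Esp N → ℂ} (hφ : TestFun φ) (x : Esp N) :
    ∑ i, cv (U.grad i) (pderivC i φ) x = cv U.lapl φ x := by
  rw [← cv_lap U.lapl_spec hφ]
  have : ∀ i, cv (U.grad i) (pderivC i φ) x = cv U.u (pderivC i (pderivC i φ)) x := fun i =>
    (cv_pd (U.grad_spec i) (hφ.pd i) x).symm
  simp only [this]
  unfold cv lapC
  simp only [Finset.mul_sum]
  rw [integral_finsetSum]
  intro i _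
  exact cv_integrable U.u_mem ((hφ.pd i).pd i) x

lemma cv_step {N : ℕ} (U : H2 N) (k : ℕ) (x : Esp N) :
    cv U.u (eta N (k + 1)) x = cv U.u (eta N k) x + cv U.lapl (KK N k) x := by
  rw [← cv_lap U.lapl_spec (KK_test N k)]
  unfold cv
  simp only [KK_lap]
  rw [← integral_add (cv_integrable U.u_mem (eta_test N k) x)]
  · congr 1; funext y; ring
  · have := (cv_integrable U.u_mem (eta_test N (k+1)) x).sub (cv_integrable U.u_mem (eta_test N k) x)
    refine this.congr (ae_of_all _ fun y => ?_)
    simp; ring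

lemma memLp_locInt {N : ℕ} {f : Esp N → ℂ} (hf : MemLp f 2 volume) :
    LocallyIntegrable f volume := hf.locallyIntegrable (by norm_num)

lemma cv_eq_conv {N : ℕ} (f φ : Esp N → ℂ) :
    cv f φ = MeasureTheory.convolution f φ (ContinuousLinearMap.mul ℝ ℂ) volume := by
  funext x; simp [cv, MeasureTheory.convolution]

lemma cv_hasFDeriv {N : ℕ} {f φ : Esp N → ℂ} (hf : MemLp f 2 volume) (hφ : TestFun φ) :
    Differentiable ℝ (cv f φ) ∧ ∀ i x, pderivC i (cv f φ) x = cv f (pderivC i φ) x := by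
  have h1 : ContDiff ℝ 1 φ := hφ.1.of_le (by norm_num)
  have h := fun x => hφ.2.hasFDerivAt_convolution_right (ContinuousLinearMap.mul ℝ ℂ)
    (memLp_locInt hf) h1 x
  rw [← cv_eq_conv] at h
  refine ⟨fun x => (h x).differentiableAt, fun i x => ?_⟩
  unfold pderivC
  rw [(h x).fderiv, convolution_precompR_apply _ (memLp_locInt hf) (hφ.2.fderiv ℝ)
    (h1.continuous_fderiv one_ne_zero), ← cv_eq_conv]

lemma cv_memLp {N : ℕ} {f φ : Esp N → ℂ} (hf : MemLp f 2 volume) (hφ : TestFun φ) :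
    MemLp (cv f φ) 2 volume :=
  ⟨cv_meas hf.1 hφ.cont, (cv_L2 hf.1 hφ.cont).trans_lt (ENNReal.mul_lt_top hφ.l1 hf.2)⟩

lemma eta_l1 (N k : ℕ) : (∫⁻ y, ‖eta N k y‖ₑ) = 1 := by
  have h : ∀ y, ‖eta N k y‖ₑ = ENNReal.ofReal (ee N k y) := fun y => by
    rw [eta, ← ofReal_norm, Complex.norm_real, Real.norm_of_nonneg (ee_nonneg N k y)]
  simp only [h]
  have hi : Integrable (ee N k) volume := by
    by_contra hc
    have := ee_int N k
    rw [integral_undef hc] at this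
    norm_num at this
  rw [← ofReal_integral_eq_lintegral_ofReal hi (ae_of_all _ (ee_nonneg N k)), ee_int]
  simp

lemma cv_eta_L2 {N : ℕ} {f : Esp N → ℂ} (hf : MemLp f 2 volume) (k : ℕ) :
    eLpNorm (cv f (eta N k)) 2 volume ≤ eLpNorm f 2 volume := by
  simpa [eta_l1] using cv_L2 hf.1 (eta_test N k).cont

lemma int_sq_eq {N : ℕ} {f : Esp N → ℂ} (hf : MemLp f 2 volume) :
    ENNReal.ofReal (∫ x, ‖f x‖ ^ 2) = eLpNorm f 2 volume ^ 2 := by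
  rw [eLpNorm_two_sq, ofReal_integral_eq_lintegral_ofReal hf.norm.integrable_sq
    (ae_of_all _ fun x => by positivity)]
  refine lintegral_congr fun x => ?_
  rw [ENNReal.ofReal_pow (norm_nonneg _), ofReal_norm]

lemma cv_eta_sq {N : ℕ} {f : Esp N → ℂ} (hf : MemLp f 2 volume) (k : ℕ) :
    ∫ x, ‖cv f (eta N k) x‖ ^ 2 ≤ ∫ x, ‖f x‖ ^ 2 := by
  have := cv_eta_L2 hf k
  rw [← ENNReal.ofReal_le_ofReal_iff (integral_nonneg fun x => by positivity), int_sq_eq hf,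
    int_sq_eq (cv_memLp hf (eta_test N k))]
  gcongr

lemma fatou_p {N : ℕ} {f : Esp N → ℂ} (hf : MemLp f 2 volume) (p : ENNReal) {M : ENNReal} {j : ℕ}
    (h : ∀ k ≥ j, eLpNorm (cv f (eta N k)) p volume ≤ M) : eLpNorm f p volume ≤ M := by
  refine (Lp.eLpNorm_lim_le_liminf_eLpNorm (fun k => cv_meas hf.1 (eta_test N k).cont) f
    (cv_ae_tendsto (memLp_locInt hf))).trans ?_
  refine liminf_le_of_frequently_le' (Eventually.frequently ?_)
  filter_upwards [eventually_ge_atTop j] with k hk using h k hk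

lemma fatou_sum {N : ℕ} (U : H2 N) {M : ℝ}
    (h : ∀ k, ∑ i, ∫ x, ‖cv (U.grad i) (eta N k) x‖ ^ 2 ≤ M) : U.gradSq ≤ M := by
  have hM : 0 ≤ M := le_trans (Finset.sum_nonneg fun i _ => integral_nonneg fun x => by positivity)
    (h 0)
  rw [← ENNReal.ofReal_le_ofReal_iff hM, H2.gradSq, ENNReal.ofReal_sum_of_nonneg
    (fun i _ => integral_nonneg fun x => by positivity)]
  have e : ∀ i, ENNReal.ofReal (∫ x, ‖U.grad i x‖ ^ 2) = ∫⁻ x, ‖U.grad i x‖ₑ ^ 2 := fun i => by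
    rw [int_sq_eq (U.grad_mem i), eLpNorm_two_sq]
  have e' : ∀ i k, ENNReal.ofReal (∫ x, ‖cv (U.grad i) (eta N k) x‖ ^ 2)
      = ∫⁻ x, ‖cv (U.grad i) (eta N k) x‖ₑ ^ 2 := fun i k => by
    rw [int_sq_eq (cv_memLp (U.grad_mem i) (eta_test N k)), eLpNorm_two_sq]
  have hm : ∀ i k, AEMeasurable (fun x => ‖cv (U.grad i) (eta N k) x‖ₑ ^ 2) volume := fun i k =>
    (cv_meas (U.grad_mem i).1 (eta_test N k).cont).enorm.pow_const 2
  simp only [e]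
  rw [← lintegral_finsetSum' _ (fun i _ => (U.grad_mem i).1.enorm.pow_const 2)]
  have hae : ∀ᵐ x, ∀ i, Tendsto (fun k => cv (U.grad i) (eta N k) x) atTop (𝓝 (U.grad i x)) :=
    ae_all_iff.2 fun i => cv_ae_tendsto (memLp_locInt (U.grad_mem i))
  calc ∫⁻ x, ∑ i, ‖U.grad i x‖ₑ ^ 2
      ≤ ∫⁻ x, liminf (fun k => ∑ i, ‖cv (U.grad i) (eta N k) x‖ₑ ^ 2) atTop := by
        refine lintegral_mono_ae ?_
        filter_upwards [hae] with x hx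
        refine le_of_eq (Tendsto.liminf_eq ?_).symm
        refine tendsto_finsetSum _ fun i _ => ?_
        exact ((ENNReal.continuous_pow 2).tendsto _).comp ((continuous_enorm.tendsto _).comp (hx i))
    _ ≤ liminf (fun k => ∫⁻ x, ∑ i, ‖cv (U.grad i) (eta N k) x‖ₑ ^ 2) atTop :=
        lintegral_liminf_le' fun k => Finset.aemeasurable_fun_sum _ fun i _ => hm i k
    _ ≤ ENNReal.ofReal M := by
        refine liminf_le_of_frequently_le' (Eventually.frequently (Eventually.of_forall fun k => ?_))
        rw [lintegral_finsetSum' _ (fun i _ => hm i k)]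
        simp only [← e']
        rw [← ENNReal.ofReal_sum_of_nonneg (fun i _ => integral_nonneg fun x => by positivity)]
        exact ENNReal.ofReal_le_ofReal (h k)

lemma ibp {N : ℕ} (U : H2 N) {φ : Esp N → ℂ} (hφ : TestFun φ) (i : Fin N) :
    ∫ x, (starRingEnd ℂ) (cv U.u φ x) * cv (U.grad i) (pderivC i φ) x
      = - ∫ x, ((‖cv (U.grad i) φ x‖ ^ 2 : ℝ) : ℂ) := by
  obtain ⟨hd1, hp1⟩ := cv_hasFDeriv U.u_mem hφ
  obtain ⟨hd2, hp2⟩ := cv_hasFDeriv (U.grad_mem i) hφ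
  have hw := cv_memLp U.u_mem hφ
  have hg := cv_memLp (U.grad_mem i) hφ
  have hg' := cv_memLp (U.grad_mem i) (hφ.pd i)
  have hcs : ∀ {f : Esp N → ℂ}, MemLp f 2 volume → MemLp (fun x => (starRingEnd ℂ) (f x)) 2 volume :=
    fun hf => hf.star
  have hdc : ∀ x, fderiv ℝ (fun x => (starRingEnd ℂ) (cv U.u φ x)) x (EuclideanSpace.single i 1)
      = (starRingEnd ℂ) (cv (U.grad i) φ x) := by
    intro x
    have h1 := (Complex.conjCLE.toContinuousLinearMap.hasFDerivAt (x := cv U.u φ x)).comp x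
      (hd1 x).hasFDerivAt
    have h2 : fderiv ℝ (fun x => (starRingEnd ℂ) (cv U.u φ x)) x = _ := h1.fderiv
    rw [h2]
    have h3 := hp1 i x
    rw [cv_pd (U.grad_spec i) hφ] at h3
    unfold pderivC at h3
    simp [h3]
  have key := integral_mul_fderiv_eq_neg_fderiv_mul_of_integrable (μ := (volume : Measure (Esp N)))
    (f := fun x => (starRingEnd ℂ) (cv U.u φ x)) (g := cv (U.grad i) φ)
    (v := EuclideanSpace.single i (1:ℝ)) ?_ ?_ ?_ ?_ ?_
  · simp only [hdc] at key
    have e : ∀ x, fderiv ℝ (cv (U.grad i) φ) x (EuclideanSpace.single i 1)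
      = cv (U.grad i) (pderivC i φ) x := fun x => hp2 i x
    simp only [e] at key
    rw [key]
    congr 2
    funext x
    rw [Complex.conj_mul']
    push_cast
    rfl
  · simp only [hdc]
    exact (hcs hg).integrable_mul hg
  · have e : ∀ x, fderiv ℝ (cv (U.grad i) φ) x (EuclideanSpace.single i 1)
      = cv (U.grad i) (pderivC i φ) x := fun x => hp2 i x
    simp only [e]
    exact (hcs hw).integrable_mul hg'
  · exact (hcs hw).integrable_mul hg
  · intro x _
    exact (Complex.conjCLE.toContinuousLinearMap.hasFDerivAt (x := cv U.u φ x)).differentiableAt.comp x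
      (hd1 x)
  · intro x _; exact hd2 x

lemma ibp_sum {N : ℕ} (U : H2 N) {φ : Esp N → ℂ} (hφ : TestFun φ) :
    ((∑ i, ∫ x, ‖cv (U.grad i) φ x‖ ^ 2 : ℝ) : ℂ)
      = - ∫ x, (starRingEnd ℂ) (cv U.u φ x) * cv U.lapl φ x := by
  have h : ∀ x, (starRingEnd ℂ) (cv U.u φ x) * cv U.lapl φ x
      = ∑ i, (starRingEnd ℂ) (cv U.u φ x) * cv (U.grad i) (pderivC i φ) x := fun x => by
    rw [← cv_div U hφ, Finset.mul_sum]
  simp only [h]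
  rw [integral_finsetSum]
  · simp only [ibp U hφ]
    rw [Finset.sum_neg_distrib, neg_neg]
    push_cast
    refine Finset.sum_congr rfl fun i _ => ?_
    rw [← integral_complex_ofReal]
    simp
  · intro i _
    exact (cv_memLp U.u_mem hφ).star.integrable_mul (cv_memLp (U.grad_mem i) (hφ.pd i))

lemma grad_ineq {N : ℕ} (U : H2 N) {t : ℝ} (ht : 0 < t) :
    2 * U.gradSq ≤ t * U.lapSq + t⁻¹ * U.massSq := by
  suffices h : U.gradSq ≤ (t * U.lapSq + t⁻¹ * U.massSq) / 2 by linarith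
  refine fatou_sum U fun k => ?_
  have hφ := eta_test N k
  have h := ibp_sum U hφ
  have hn : (∑ i, ∫ x, ‖cv (U.grad i) (eta N k) x‖ ^ 2 : ℝ)
      ≤ ‖∫ x, (starRingEnd ℂ) (cv U.u (eta N k) x) * cv U.lapl (eta N k) x‖ := by
    rw [← norm_neg, ← h, Complex.norm_real]
    exact le_abs_self _
  refine hn.trans ((norm_integral_le_integral_norm _).trans ?_)
  have i1 := (cv_memLp U.u_mem hφ).norm.integrable_sq
  have i2 := (cv_memLp U.lapl_mem hφ).norm.integrable_sq
  have : ∫ x, ‖(starRingEnd ℂ) (cv U.u (eta N k) x) * cv U.lapl (eta N k) x‖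
      ≤ ∫ x, (t / 2 * ‖cv U.lapl (eta N k) x‖ ^ 2 + t⁻¹ / 2 * ‖cv U.u (eta N k) x‖ ^ 2) := by
    refine integral_mono ((cv_memLp U.u_mem hφ).star.integrable_mul (cv_memLp U.lapl_mem hφ)).norm
      ((i2.const_mul _).add (i1.const_mul _)) fun x => ?_
    simp only [norm_mul, RCLike.norm_conj]
    have := sq_nonneg (t * ‖cv U.lapl (eta N k) x‖ - ‖cv U.u (eta N k) x‖)
    rw [← sub_nonneg]
    have e : t / 2 * ‖cv U.lapl (eta N k) x‖ ^ 2 + t⁻¹ / 2 * ‖cv U.u (eta N k) x‖ ^ 2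
      - ‖cv U.u (eta N k) x‖ * ‖cv U.lapl (eta N k) x‖
      = (t * ‖cv U.lapl (eta N k) x‖ - ‖cv U.u (eta N k) x‖) ^ 2 * (t⁻¹ / 2) := by
      field_simp; ring
    rw [e]; positivity
  refine this.trans ?_
  rw [integral_add (i2.const_mul _) (i1.const_mul _), integral_const_mul, integral_const_mul]
  have a := cv_eta_sq U.lapl_mem k
  have b := cv_eta_sq U.u_mem k
  have a' := mul_le_mul_of_nonneg_left a (by positivity : 0 ≤ t / 2)
  have b' := mul_le_mul_of_nonneg_left b (by positivity : 0 ≤ t⁻¹ / 2)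
  unfold H2.lapSq H2.massSq
  linarith

lemma Tfun_ge_mass {N : ℕ} (U : H2 N) (c : ℝ) : c * U.massSq ≤ Tfun c U := by
  have := grad_ineq U one_pos
  unfold Tfun
  simp at this
  linarith

lemma Tfun_ge_lap {N : ℕ} (U : H2 N) {c : ℝ} (hc : 0 < c) : c / (1 + c) * U.lapSq ≤ Tfun c U := by
  have := grad_ineq U (t := (1 + c)⁻¹) (by positivity)
  unfold Tfun
  rw [inv_inv] at this
  have e : c / (1 + c) = 1 - (1 + c)⁻¹ := by field_simp; ring
  rw [e]; linarith

lemma cv_Lp {N : ℕ} {f φ : Esp N → ℂ} {p s a L : ℝ} (hp : 2 < p) (hs : 0 ≤ s) (ha : 0 ≤ a)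
    (hL : 0 ≤ L) (hf : MemLp f 2 volume) (hfL : eLpNorm f 2 volume ≤ ENNReal.ofReal L)
    (hφ : TestFun φ) (h2 : eLpNorm φ 2 volume ≤ ENNReal.ofReal s)
    (h1 : ∫⁻ x, ‖φ x‖ₑ ≤ ENNReal.ofReal a) :
    eLpNorm (cv f φ) (ENNReal.ofReal p) volume
      ≤ ENNReal.ofReal (L * (s ^ (1 - 2 / p) * a ^ (2 / p))) := by
  have h := interp (g := cv f φ) (S := L * s) (A := L * a) hp (by positivity) (by positivity)
    (fun x => by
      refine (cv_sup hf.1 hφ.cont x).trans ?_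
      rw [ENNReal.ofReal_mul hL]
      gcongr)
    (by
      refine (cv_L2 hf.1 hφ.cont).trans ?_
      rw [mul_comm L, ENNReal.ofReal_mul ha]
      gcongr)
  refine h.trans (le_of_eq ?_)
  congr 1
  rw [Real.mul_rpow hL hs, Real.mul_rpow hL ha]
  have : L ^ (1 - 2 / p) * L ^ (2 / p) = L := by
    rw [← Real.rpow_add_of_nonneg hL, sub_add_cancel, Real.rpow_one]
    · rw [sub_nonneg, div_le_one (by linarith)]; exact hp.le
    · positivity
  calc L ^ (1 - 2 / p) * s ^ (1 - 2 / p) * (L ^ (2 / p) * a ^ (2 / p))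
      = (L ^ (1 - 2 / p) * L ^ (2 / p)) * (s ^ (1 - 2 / p) * a ^ (2 / p)) := by ring
    _ = _ := by rw [this]

/-- The geometric ratio of the dyadic pieces. -/
def rho (N : ℕ) (p : ℝ) : ℝ := (Real.sqrt (2 ^ N) / 4) ^ (1 - 2 / p) * (1 / 4 : ℝ) ^ (2 / p)

lemma rho_pos (N : ℕ) (p : ℝ) : 0 < rho N p := by unfold rho; positivity

lemma rho_lt {N : ℕ} {σ : ℝ} (hσ0 : 0 < σ) (h : N * σ < 4 * (σ + 1)) :
    rho N (2 * σ + 2) < 1 := by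
  unfold rho
  have e1 : Real.sqrt (2 ^ N) = (2 : ℝ) ^ ((N : ℝ) / 2) := by
    rw [Real.sqrt_eq_rpow, ← Real.rpow_natCast, ← Real.rpow_mul (by norm_num)]
    congr 1; ring
  have e2 : (4 : ℝ) = 2 ^ (2 : ℝ) := by norm_num
  have e3 : Real.sqrt (2 ^ N) / 4 = (2 : ℝ) ^ ((N : ℝ) / 2 - 2) := by
    rw [Real.rpow_sub (by norm_num), ← e2, e1]
  have e4 : (1 / 4 : ℝ) = 2 ^ (-2 : ℝ) := by
    rw [Real.rpow_neg (by norm_num)]; norm_num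
  rw [e3, e4, ← Real.rpow_mul (by norm_num), ← Real.rpow_mul (by norm_num),
    ← Real.rpow_add (by norm_num)]
  refine Real.rpow_lt_one_of_one_lt_of_neg (by norm_num) ?_
  have : ((N : ℝ) / 2 - 2) * (1 - 2 / (2 * σ + 2)) + -2 * (2 / (2 * σ + 2))
      = (N * σ - 4 * (σ + 1)) / (2 * σ + 2) := by
    field_simp; ring
  rw [this]
  exact div_neg_of_neg_of_pos (by linarith) (by linarith)

lemma KK_Lp (N : ℕ) {p : ℝ} (hp : 2 < p) : ∃ C : ℝ, 0 ≤ C ∧ ∀ (f : Esp N → ℂ) (L : ℝ) (k : ℕ),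
    0 ≤ L → MemLp f 2 volume → eLpNorm f 2 volume ≤ ENNReal.ofReal L →
    eLpNorm (cv f (KK N k)) (ENNReal.ofReal p) volume ≤ ENNReal.ofReal (C * L * rho N p ^ k) := by
  obtain ⟨B, hB0, hB⟩ := KK_bound N
  have hV := V0_pos N
  set s0 := B * Real.sqrt (2 ^ N * V0 N) with hs0
  set a0 := B * (2 ^ N * V0 N) with ha0
  have hs0' : 0 ≤ s0 := by positivity
  have ha0' : 0 ≤ a0 := by positivity
  refine ⟨s0 ^ (1 - 2 / p) * a0 ^ (2 / p), by positivity, fun f L k hL hf hfL => ?_⟩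
  set q := Real.sqrt (2 ^ N) with hq
  have hqp : 0 < q := by positivity
  have hqq : q ^ 2 = 2 ^ N := Real.sq_sqrt (by positivity)
  have hpow : ((2 : ℝ) ^ k) ^ N = (q ^ k) ^ 2 := by
    rw [← pow_mul, mul_comm k N, pow_mul, ← hqq, ← pow_mul, ← pow_mul, mul_comm]
  have hsq : Real.sqrt ((2 / 2 ^ k) ^ N * V0 N) = Real.sqrt (2 ^ N * V0 N) / q ^ k := by
    rw [div_pow, hpow, div_mul_eq_mul_div, Real.sqrt_div (by positivity), Real.sqrt_sq (by positivity)]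
  have hs : B * (2 ^ k) ^ N / 4 ^ k * Real.sqrt ((2 / 2 ^ k) ^ N * V0 N) = s0 * (q / 4) ^ k := by
    rw [hsq, hpow, hs0, div_pow]; field_simp
  have ha : B * (2 ^ k) ^ N / 4 ^ k * ((2 / 2 ^ k) ^ N * V0 N) = a0 * (1 / 4) ^ k := by
    rw [ha0, div_pow, div_pow, one_pow]; field_simp
  have h2 := L2_bound (φ := KK N k) (r := 2 / 2 ^ k) (by positivity) (by positivity)
    (hB k) (KK_zero N k)
  have h1 := L1_bound (φ := KK N k) (r := 2 / 2 ^ k) (by positivity) (by positivity)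
    (hB k) (KK_zero N k)
  rw [hs] at h2
  rw [ha] at h1
  refine (cv_Lp hp (by positivity) (by positivity) hL hf hfL (KK_test N k) h2 h1).trans
    (le_of_eq ?_)
  congr 1
  rw [Real.mul_rpow hs0' (by positivity), Real.mul_rpow ha0' (by positivity)]
  have e1 : ((q / 4) ^ k) ^ (1 - 2 / p) = ((q / 4) ^ (1 - 2 / p)) ^ k := by
    rw [← Real.rpow_natCast, ← Real.rpow_mul (by positivity), mul_comm, Real.rpow_mul (by positivity),
      Real.rpow_natCast]
  have e2 : ((1 / 4 : ℝ) ^ k) ^ (2 / p) = ((1 / 4 : ℝ) ^ (2 / p)) ^ k := by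
    rw [← Real.rpow_natCast, ← Real.rpow_mul (by positivity), mul_comm, Real.rpow_mul (by positivity),
      Real.rpow_natCast]
  rw [e1, e2, rho, mul_pow]
  ring

lemma eta_Lp (N k : ℕ) {p : ℝ} (hp : 2 < p) : ∃ C : ℝ, 0 ≤ C ∧ ∀ (f : Esp N → ℂ) (L : ℝ),
    0 ≤ L → MemLp f 2 volume → eLpNorm f 2 volume ≤ ENNReal.ofReal L →
    eLpNorm (cv f (eta N k)) (ENNReal.ofReal p) volume ≤ ENNReal.ofReal (C * L) := by
  have hφ := eta_test N k
  refine ⟨(eLpNorm (eta N k) 2 volume).toReal ^ (1 - 2 / p) * (1 : ℝ) ^ (2 / p), by positivity,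
    fun f L hL hf hfL => ?_⟩
  rw [mul_comm _ L]
  refine cv_Lp hp (by positivity) zero_le_one hL hf hfL hφ ?_ ?_
  · rw [ENNReal.ofReal_toReal (hφ.memLp 2).2.ne]
  · rw [eta_l1]; simp

lemma telescope {N : ℕ} {p : ℝ} (hp : 2 < p) (hr : rho N p < 1) {C : ℝ} (hC : 0 ≤ C)
    (U : H2 N) {L M : ℝ} (hL : 0 ≤ L) (hM : 0 ≤ M) (j : ℕ)
    (hK : ∀ k, eLpNorm (cv U.lapl (KK N k)) (ENNReal.ofReal p) volume
      ≤ ENNReal.ofReal (C * L * rho N p ^ k))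
    (hj : eLpNorm (cv U.u (eta N j)) (ENNReal.ofReal p) volume ≤ ENNReal.ofReal M) :
    eLpNorm U.u (ENNReal.ofReal p) volume
      ≤ ENNReal.ofReal (M + C * L * rho N p ^ j / (1 - rho N p)) := by
  have hr0 := rho_pos N p
  have hr1 : 0 < 1 - rho N p := by linarith
  have hp1 : (1 : ENNReal) ≤ ENNReal.ofReal p := by
    rw [ENNReal.one_le_ofReal]; linarith
  have key : ∀ n, eLpNorm (cv U.u (eta N (j + n))) (ENNReal.ofReal p) volume
      ≤ ENNReal.ofReal (M + C * L * rho N p ^ j * ((1 - rho N p ^ n) / (1 - rho N p))) := by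
    intro n
    induction n with
    | zero => simpa using hj
    | succ n ih =>
      have e : cv U.u (eta N (j + (n + 1))) = cv U.u (eta N (j + n)) + cv U.lapl (KK N (j + n)) := by
        funext x; exact cv_step U (j + n) x
      rw [e]
      refine (eLpNorm_add_le (cv_meas U.u_mem.1 (eta_test N _).cont)
        (cv_meas U.lapl_mem.1 (KK_test N _).cont) hp1).trans ?_
      refine (add_le_add ih (hK _)).trans ?_
      have hn : 0 ≤ 1 - rho N p ^ n := by
        have := pow_le_one₀ (n := n) hr0.le hr.le
        linarith
      rw [← ENNReal.ofReal_add (by positivity) (by positivity)]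
      refine ENNReal.ofReal_le_ofReal (le_of_eq ?_)
      rw [pow_add, pow_succ]
      field_simp
      ring
  refine fatou_p U.u_mem _ (j := j) fun k hk => ?_
  obtain ⟨n, rfl⟩ := Nat.exists_eq_add_of_le hk
  refine (key n).trans (ENNReal.ofReal_le_ofReal ?_)
  have e : C * L * rho N p ^ j / (1 - rho N p) = C * L * rho N p ^ j * (1 / (1 - rho N p)) := by ring
  rw [e]
  have : 0 ≤ rho N p ^ n := by positivity
  gcongr
  linarith

lemma eLpNorm_sqrt {N : ℕ} {f : Esp N → ℂ} (hf : MemLp f 2 volume) {A : ℝ}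
    (h : ∫ x, ‖f x‖ ^ 2 ≤ A) : eLpNorm f 2 volume ≤ ENNReal.ofReal (Real.sqrt A) := by
  have hA : 0 ≤ A := (integral_nonneg fun x => by positivity).trans h
  rw [← ENNReal.pow_le_pow_left_iff two_ne_zero, ← int_sq_eq hf, ← ENNReal.ofReal_pow (by positivity),
    Real.sq_sqrt hA]
  exact ENNReal.ofReal_le_ofReal h

lemma eLpNorm_of_pPow {N : ℕ} {σ : ℝ} (hσ : 0 < σ) (U : H2 N) (h : U.pPow σ = 1) :
    eLpNorm U.u (ENNReal.ofReal (2 * σ + 2)) volume = 1 := by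
  have hp0 : 0 < 2 * σ + 2 := by linarith
  rw [eLpNorm_eq_lintegral_rpow_enorm_toReal (by simpa using hp0) (by simp),
    ENNReal.toReal_ofReal hp0.le]
  unfold H2.pPow at h
  have hi : Integrable (fun x => ‖U.u x‖ ^ (2 * σ + 2)) volume := by
    by_contra hc
    rw [integral_undef hc] at h
    norm_num at h
  have : ∫⁻ x, ‖U.u x‖ₑ ^ (2 * σ + 2) = 1 := by
    have h2 := ofReal_integral_eq_lintegral_ofReal hi (ae_of_all _ fun x => by positivity)
    rw [h] at h2
    rw [← ENNReal.ofReal_one, h2]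
    refine lintegral_congr fun x => ?_
    rw [← ENNReal.ofReal_rpow_of_nonneg (norm_nonneg _) hp0.le, ofReal_norm]
  rw [this]; simp

lemma mass_lower {N : ℕ} {σ : ℝ} (hσ : 0 < σ) (h : N * σ < 4 * (σ + 1)) (Λ : ℝ) :
    ∃ m0 : ℝ, 0 < m0 ∧ ∀ U : H2 N, U.pPow σ = 1 → U.lapSq ≤ Λ → m0 ≤ U.massSq := by
  have hp : 2 < 2 * σ + 2 := by linarith
  have hr := rho_lt hσ h
  have hr0 := rho_pos N (2 * σ + 2)
  have hr1 : 0 < 1 - rho N (2 * σ + 2) := by linarith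
  obtain ⟨C, hC, hCK⟩ := KK_Lp N hp
  set L := Real.sqrt Λ
  have hL : 0 ≤ L := by positivity
  obtain ⟨j, hj⟩ : ∃ j : ℕ, C * L * rho N (2 * σ + 2) ^ j / (1 - rho N (2 * σ + 2)) < 1 / 2 := by
    have ht : Tendsto (fun j : ℕ => C * L * rho N (2 * σ + 2) ^ j / (1 - rho N (2 * σ + 2))) atTop
        (𝓝 (C * L * 0 / (1 - rho N (2 * σ + 2)))) :=
      ((tendsto_pow_atTop_nhds_zero_of_lt_one hr0.le hr).const_mul _).div_const _
    simp only [mul_zero, zero_div] at ht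
    exact (ht.eventually (gt_mem_nhds (by norm_num : (0 : ℝ) < 1 / 2))).exists
  obtain ⟨D, hD, hDe⟩ := eta_Lp N j hp
  refine ⟨(1 / (2 * (D + 1))) ^ 2, by positivity, fun U hU hlap => ?_⟩
  have hm : 0 ≤ U.massSq := integral_nonneg fun x => by positivity
  have h1 := telescope hp hr hC U hL (M := D * Real.sqrt U.massSq) (by positivity) j
    (fun k => hCK _ _ k hL U.lapl_mem (eLpNorm_sqrt U.lapl_mem hlap))
    (hDe _ _ (by positivity) U.u_mem (eLpNorm_sqrt U.u_mem le_rfl))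
  rw [eLpNorm_of_pPow hσ U hU, ENNReal.one_le_ofReal] at h1
  have h2 : 1 / 2 ≤ D * Real.sqrt U.massSq := by linarith
  have h3 : 1 / (2 * (D + 1)) ≤ Real.sqrt U.massSq := by
    rw [div_le_iff₀ (by positivity)]
    nlinarith [Real.sqrt_nonneg U.massSq]
  calc (1 / (2 * (D + 1))) ^ 2 ≤ Real.sqrt U.massSq ^ 2 := by gcongr
    _ = _ := Real.sq_sqrt hm

open scoped LineDeriv FourierTransform SchwartzMap

/-- The `i`-th basis vector. -/
def bv {N : ℕ} (i : Fin N) : Esp N := EuclideanSpace.single i (1 : ℝ)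

lemma schwartz_pd {N : ℕ} (w : 𝓢(Esp N, ℂ)) (i : Fin N) (φ : Esp N → ℂ) (hφ : TestFun φ) :
    ∫ x, w x * pderivC i φ x = - ∫ x, (∂_{bv i} w) x * φ x := by
  have := SchwartzMap.integral_mul_lineDerivOp_right_eq_neg_left (μ := (volume : Measure (Esp N)))
    w (hφ.2.toSchwartzMap hφ.1) (bv i)
  exact this

/-- A Schwartz function as an element of `H2`. -/
def ofS {N : ℕ} (w : 𝓢(Esp N, ℂ)) : H2 N where
  u := w
  grad := fun i => ((∂_{bv i} w : 𝓢(Esp N, ℂ)) : Esp N → ℂ)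
  lapl := ((∑ i : Fin N, ∂_{bv i} (∂_{bv i} w) : 𝓢(Esp N, ℂ)) : Esp N → ℂ)
  u_mem := w.memLp 2
  grad_mem := fun i => (∂_{bv i} w).memLp 2
  lapl_mem := SchwartzMap.memLp _ 2 volume
  grad_spec := fun i φ hφ => schwartz_pd w i φ hφ
  lapl_spec := fun φ hφ => by
    have h : ∀ i, ∫ x, w x * pderivC i (pderivC i φ) x = ∫ x, (∂_{bv i} (∂_{bv i} w)) x * φ x :=
      fun i => by
        rw [schwartz_pd w i _ (hφ.pd i), schwartz_pd _ i _ hφ, neg_neg]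
    simp only [lapC, Finset.mul_sum, _root_.sum_apply, Finset.sum_mul]
    rw [integral_finsetSum, integral_finsetSum]
    · exact Finset.sum_congr rfl fun i _ => h i
    · intro i _
      exact ((∂_{bv i} (∂_{bv i} w)).memLp 2).integrable_mul (hφ.memLp 2)
    · intro i _
      exact (w.memLp 2).integrable_mul (((hφ.pd i).pd i).memLp 2)

/-- Multiplication by the symbol of a derivative. -/
def mulS {N : ℕ} (i : Fin N) (f : 𝓢(Esp N, ℂ)) : 𝓢(Esp N, ℂ) :=
  -(2 * Real.pi * Complex.I) • SchwartzMap.smulLeftCLM ℂ (inner ℝ · (bv i)) f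

lemma mulS_apply {N : ℕ} (i : Fin N) (f : 𝓢(Esp N, ℂ)) (x : Esp N) :
    mulS i f x = -(2 * Real.pi * Complex.I) * (x i * f x) := by
  have : (fun x : Esp N => inner ℝ x (bv i)).HasTemperateGrowth :=
    ((innerSL ℝ).flip (bv i)).hasTemperateGrowth
  simp only [mulS, _root_.smul_apply, SchwartzMap.smulLeftCLM_apply_apply this]
  simp [bv, EuclideanSpace.inner_single_right]

lemma four_pd {N : ℕ} (i : Fin N) (f : 𝓢(Esp N, ℂ)) : ∂_{bv i} (𝓕 f) = 𝓕 (mulS i f) :=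
  SchwartzMap.lineDerivOp_fourier_eq f (bv i)

lemma four_lap {N : ℕ} (f : 𝓢(Esp N, ℂ)) :
    ∑ i : Fin N, ∂_{bv i} (∂_{bv i} (𝓕 f)) = 𝓕 (∑ i : Fin N, mulS i (mulS i f)) := by
  simp only [four_pd]
  rw [← SchwartzMap.fourierTransformCLM_apply (𝕜 := ℂ), map_sum]
  simp

lemma schwartz_sq {N : ℕ} (f : 𝓢(Esp N, ℂ)) : Integrable (fun x => ‖f x‖ ^ 2) volume :=
  (f.memLp 2).norm.integrable_sq

lemma Tfun_four {N : ℕ} (c : ℝ) (f : 𝓢(Esp N, ℂ)) :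
    Tfun c (ofS (𝓕 f)) = ∫ ξ, ((4 * Real.pi ^ 2 * ‖ξ‖ ^ 2 - 1) ^ 2 + c) * ‖f ξ‖ ^ 2 := by
  have h1 : (ofS (𝓕 f)).massSq = ∫ ξ, ‖f ξ‖ ^ 2 := SchwartzMap.integral_norm_sq_fourier f
  have h2 : (ofS (𝓕 f)).gradSq = ∑ i, ∫ ξ, ‖mulS i f ξ‖ ^ 2 := by
    unfold H2.gradSq
    refine Finset.sum_congr rfl fun i _ => ?_
    rw [← SchwartzMap.integral_norm_sq_fourier, ← four_pd]; rfl
  have h3 : (ofS (𝓕 f)).lapSq = ∫ ξ, ‖(∑ i : Fin N, mulS i (mulS i f)) ξ‖ ^ 2 := by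
    unfold H2.lapSq
    rw [← SchwartzMap.integral_norm_sq_fourier, ← four_lap]; rfl
  unfold Tfun
  rw [h1, h2, h3, ← integral_finsetSum _ (fun i _ => schwartz_sq _), ← integral_const_mul,
    ← integral_const_mul, ← integral_sub, ← integral_add]
  · refine integral_congr_ae (ae_of_all _ fun ξ => ?_)
    have e1 : ∀ i, ‖mulS i f ξ‖ ^ 2 = 4 * Real.pi ^ 2 * (ξ i) ^ 2 * ‖f ξ‖ ^ 2 := fun i => by
      rw [mulS_apply]
      simp only [norm_mul, norm_neg, Complex.norm_I, Complex.norm_real, Complex.norm_ofNat,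
        Real.norm_eq_abs, mul_pow, sq_abs]
      ring
    have e2 : (∑ i : Fin N, mulS i (mulS i f)) ξ = -(((4 * Real.pi ^ 2 * ‖ξ‖ ^ 2 : ℝ) : ℂ) * f ξ) := by
      rw [_root_.sum_apply]
      simp only [mulS_apply]
      rw [EuclideanSpace.real_norm_sq_eq]
      push_cast
      rw [Finset.mul_sum, Finset.sum_mul, ← Finset.sum_neg_distrib]
      refine Finset.sum_congr rfl fun i _ => ?_
      linear_combination 4 * (Real.pi : ℂ) ^ 2 * (ξ i) ^ 2 * f ξ * Complex.I_sq
    simp only [e1, e2, norm_neg, norm_mul, Complex.norm_real, mul_pow, Real.norm_eq_abs, sq_abs]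
    rw [← Finset.sum_mul, ← Finset.mul_sum, ← EuclideanSpace.real_norm_sq_eq]
    ring
  · exact (schwartz_sq _).sub ((integrable_finsetSum _ fun i _ => schwartz_sq _).const_mul _)
  · exact (schwartz_sq _).const_mul _
  · exact schwartz_sq _
  · exact ((integrable_finsetSum _ fun i _ => schwartz_sq _).const_mul _)

lemma ofS_pPow {N : ℕ} (σ : ℝ) (w : 𝓢(Esp N, ℂ)) (a : ℝ) (ha : 0 ≤ a) :
    (ofS ((a : ℂ) • w)).pPow σ = a ^ (2 * σ + 2) * ∫ x, ‖w x‖ ^ (2 * σ + 2) := by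
  unfold H2.pPow
  rw [← integral_const_mul]
  refine integral_congr_ae (ae_of_all _ fun x => ?_)
  simp only [ofS, _root_.smul_apply, smul_eq_mul, norm_mul, Complex.norm_real,
    Real.norm_of_nonneg ha]
  rw [Real.mul_rpow ha (norm_nonneg _)]

lemma four_smul {N : ℕ} (f : 𝓢(Esp N, ℂ)) (a : ℂ) : 𝓕 (a • f) = a • 𝓕 f := by
  rw [← SchwartzMap.fourierTransformCLM_apply (𝕜 := ℂ), map_smul]; simp

/-- `tmin` is bounded above by the Rayleigh quotient of a nonzero function. -/
lemma exists_test {N : ℕ} {σ : ℝ} (hσ : 0 < σ) (c : ℝ) (f : 𝓢(Esp N, ℂ)) {P : ℝ} (hP : 0 < P)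
    (h : P ^ (2 * σ + 2) ≤ ∫ x, ‖𝓕 f x‖ ^ (2 * σ + 2)) {M : ℝ}
    (hM : ∫ ξ, ((4 * Real.pi ^ 2 * ‖ξ‖ ^ 2 - 1) ^ 2 + c) * ‖f ξ‖ ^ 2 ≤ M) (hM0 : 0 ≤ M) :
    ∃ U : H2 N, U.pPow σ = 1 ∧ Tfun c U ≤ M / P ^ 2 := by
  set I := ∫ x, ‖𝓕 f x‖ ^ (2 * σ + 2)
  have hp : 0 < 2 * σ + 2 := by linarith
  have hI : 0 < I := (Real.rpow_pos_of_pos hP _).trans_le h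
  set Q := I ^ (2 * σ + 2)⁻¹
  have hQ : 0 < Q := by positivity
  have hQp : Q ^ (2 * σ + 2) = I := Real.rpow_inv_rpow hI.le hp.ne'
  have hPQ : P ≤ Q := by
    rw [← hQp] at h
    exact (Real.rpow_le_rpow_iff hP.le hQ.le hp).1 h
  refine ⟨ofS (((Q⁻¹ : ℝ) : ℂ) • 𝓕 f), ?_, ?_⟩
  · rw [ofS_pPow _ _ _ (by positivity), Real.inv_rpow hQ.le, hQp]
    exact inv_mul_cancel₀ hI.ne'
  · rw [← four_smul, Tfun_four]
    have e : ∀ ξ : Esp N, ((4 * Real.pi ^ 2 * ‖ξ‖ ^ 2 - 1) ^ 2 + c) * ‖(((Q⁻¹ : ℝ) : ℂ) • f) ξ‖ ^ 2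
      = (Q⁻¹) ^ 2 * (((4 * Real.pi ^ 2 * ‖ξ‖ ^ 2 - 1) ^ 2 + c) * ‖f ξ‖ ^ 2) := fun ξ => by
      simp only [_root_.smul_apply, smul_eq_mul, norm_mul, Complex.norm_real, mul_pow,
        Real.norm_eq_abs, sq_abs]
      ring
    simp only [e]
    rw [integral_const_mul, div_eq_inv_mul, inv_pow]
    calc (Q ^ 2)⁻¹ * _ ≤ (Q ^ 2)⁻¹ * M := by gcongr
      _ ≤ (P ^ 2)⁻¹ * M := by gcongr

open scoped ContDiff LineDeriv FourierTransform SchwartzMap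
/-- A fixed cutoff on the line. -/
def chi : ContDiffBump (0 : ℝ) := ⟨1 / 2, 1, by norm_num, by norm_num⟩

lemma chi_one {t : ℝ} (h : |t| ≤ 1 / 2) : chi t = 1 :=
  chi.one_of_mem_closedBall (by simpa [chi] using h)

lemma chi_zero {t : ℝ} (h : 1 ≤ |t|) : chi t = 0 :=
  chi.zero_of_le_dist (by simpa [chi] using h)

/-- Profile concentrated near the sphere `2π|ξ| = 1`. -/
def prof (δ : ℝ) (s : ℝ) : ℝ := chi ((4 * Real.pi ^ 2 * s - 1) / δ)

lemma prof_test (N : ℕ) {δ : ℝ} (hδ : 0 < δ) (hδ1 : δ ≤ 1 / 2) : TestFun (rad (N := N) (prof δ)) := by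
  refine rad_test (r := 1) ?_ zero_le_one fun s hs => ?_
  · have : ContDiff ℝ ∞ (chi : ℝ → ℝ) := chi.contDiff
    exact this.comp (by fun_prop)
  · refine chi_zero ?_
    have := Real.pi_gt_three
    refine le_trans ?_ (le_abs_self _)
    rw [le_div_iff₀ hδ]
    nlinarith [mul_self_nonneg Real.pi]

/-- The test function in frequency space. -/
def fS (N : ℕ) {δ : ℝ} (hδ : 0 < δ) (hδ1 : δ ≤ 1 / 2) : 𝓢(Esp N, ℂ) :=
  (prof_test N hδ hδ1).2.toSchwartzMap (prof_test N hδ hδ1).1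

lemma fS_apply (N : ℕ) {δ : ℝ} (hδ : 0 < δ) (hδ1 : δ ≤ 1 / 2) (ξ : Esp N) :
    fS N hδ hδ1 ξ = ((prof δ (‖ξ‖ ^ 2) : ℝ) : ℂ) := rfl

lemma prof_nonneg (δ s : ℝ) : 0 ≤ prof δ s := chi.nonneg
lemma prof_le_one (δ s : ℝ) : prof δ s ≤ 1 := chi.le_one

/-- A spherical shell. -/
def shell (N : ℕ) (a b : ℝ) : Set (Esp N) :=
  Metric.closedBall 0 (b / (2 * Real.pi)) \ Metric.ball 0 (a / (2 * Real.pi))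

lemma shell_mem {N : ℕ} {a b : ℝ} {ξ : Esp N} :
    ξ ∈ shell N a b ↔ a ≤ 2 * Real.pi * ‖ξ‖ ∧ 2 * Real.pi * ‖ξ‖ ≤ b := by
  have hp : 0 < 2 * Real.pi := by positivity
  simp only [shell, Set.mem_sdiff, Metric.mem_closedBall, dist_zero_right, Metric.mem_ball, not_lt]
  rw [le_div_iff₀ hp, div_le_iff₀ hp, mul_comm ‖ξ‖]
  tauto

lemma shell_meas (N : ℕ) (a b : ℝ) : MeasurableSet (shell N a b) :=
  Metric.isClosed_closedBall.measurableSet.diff Metric.isOpen_ball.measurableSet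

lemma shell_vol {N : ℕ} {a b : ℝ} (ha : 0 < a) (hab : a ≤ b) :
    (volume (shell N a b)).toReal = (b ^ N - a ^ N) * (V0 N / (2 * Real.pi) ^ N) := by
  have hV := V0_pos N
  have hp : 0 < 2 * Real.pi := by positivity
  have hb : 0 ≤ b := ha.le.trans hab
  have e : volume (Metric.ball (0 : Esp N) (a / (2 * Real.pi)))
      = ENNReal.ofReal ((a / (2 * Real.pi)) ^ N * V0 N) := by
    rw [Measure.addHaar_ball_of_pos _ _ (by positivity), ENNReal.ofReal_mul (by positivity), V0,
      ENNReal.ofReal_toReal measure_ball_lt_top.ne]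
    simp
  rw [shell, measure_sdiff ?_ Metric.isOpen_ball.measurableSet.nullMeasurableSet (by rw [e]; simp),
    e, vol_cball N (by positivity), ENNReal.toReal_sub_of_le ?_ (by simp),
    ENNReal.toReal_ofReal (by positivity), ENNReal.toReal_ofReal (by positivity), div_pow, div_pow]
  · ring
  · refine ENNReal.ofReal_le_ofReal ?_
    gcongr
  · exact (Metric.ball_subset_ball (by gcongr)).trans Metric.ball_subset_closedBall

lemma shell_fin (N : ℕ) (a b : ℝ) : volume (shell N a b) ≠ ⊤ :=
  ((measure_mono Set.sdiff_subset).trans_lt measure_closedBall_lt_top).ne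

lemma prof_zero {N : ℕ} {δ : ℝ} (hδ : 0 < δ) (hδ1 : δ ≤ 1 / 2) {ξ : Esp N}
    (h : ξ ∉ shell N (1 - δ) (1 + δ)) : prof δ (‖ξ‖ ^ 2) = 0 := by
  refine chi_zero ?_
  rw [abs_div, abs_of_pos hδ, le_div_iff₀ hδ, one_mul]
  rw [shell_mem] at h
  have e : 4 * Real.pi ^ 2 * ‖ξ‖ ^ 2 = (2 * Real.pi * ‖ξ‖) ^ 2 := by ring
  rw [e]
  have h0 : 0 ≤ 2 * Real.pi * ‖ξ‖ := by positivity
  generalize 2 * Real.pi * ‖ξ‖ = ρ at h h0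
  rw [not_and_or, not_le, not_le] at h
  rw [le_abs]
  rcases h with h | h
  · right; nlinarith
  · left; nlinarith

lemma prof_one {N : ℕ} {δ : ℝ} (hδ : 0 < δ) (hδ1 : δ ≤ 1 / 2) {ξ : Esp N}
    (h : ξ ∈ shell N 1 (1 + δ / 8)) : prof δ (‖ξ‖ ^ 2) = 1 := by
  refine chi_one ?_
  rw [abs_div, abs_of_pos hδ, div_le_iff₀ hδ]
  rw [shell_mem] at h
  have e : 4 * Real.pi ^ 2 * ‖ξ‖ ^ 2 = (2 * Real.pi * ‖ξ‖) ^ 2 := by ring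
  rw [e]
  generalize 2 * Real.pi * ‖ξ‖ = ρ at h
  rw [abs_le]
  constructor <;> nlinarith

lemma fS_T {N : ℕ} {δ : ℝ} (hδ : 0 < δ) (hδ1 : δ ≤ 1 / 2) :
    ∫ ξ, ((4 * Real.pi ^ 2 * ‖ξ‖ ^ 2 - 1) ^ 2 + δ ^ 2) * ‖fS N hδ hδ1 ξ‖ ^ 2
      ≤ 2 * δ ^ 2 * (2 * δ * N * 2 ^ (N - 1) * (V0 N / (2 * Real.pi) ^ N)) := by
  have hV := V0_pos N
  have hpt : ∀ ξ : Esp N, ((4 * Real.pi ^ 2 * ‖ξ‖ ^ 2 - 1) ^ 2 + δ ^ 2) * ‖fS N hδ hδ1 ξ‖ ^ 2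
      ≤ (shell N (1 - δ) (1 + δ)).indicator (fun _ => 2 * δ ^ 2) ξ := by
    intro ξ
    rw [fS_apply, Complex.norm_real, Real.norm_of_nonneg (prof_nonneg _ _)]
    by_cases hs : ξ ∈ shell N (1 - δ) (1 + δ)
    · rw [Set.indicator_of_mem hs]
      by_cases ht : |(4 * Real.pi ^ 2 * ‖ξ‖ ^ 2 - 1) / δ| < 1
      · rw [abs_div, abs_of_pos hδ, div_lt_one hδ] at ht
        have h1 : (4 * Real.pi ^ 2 * ‖ξ‖ ^ 2 - 1) ^ 2 ≤ δ ^ 2 := by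
          rw [← sq_abs]; gcongr
        have h2 : prof δ (‖ξ‖ ^ 2) ^ 2 ≤ 1 := pow_le_one₀ (prof_nonneg _ _) (prof_le_one _ _)
        have h3 : 0 ≤ (4 * Real.pi ^ 2 * ‖ξ‖ ^ 2 - 1) ^ 2 + δ ^ 2 := by positivity
        calc _ ≤ ((4 * Real.pi ^ 2 * ‖ξ‖ ^ 2 - 1) ^ 2 + δ ^ 2) * 1 := by gcongr
          _ ≤ _ := by linarith
      · rw [prof, chi_zero (not_lt.1 ht)]
        simp; positivity
    · rw [Set.indicator_of_notMem hs, prof_zero hδ hδ1 hs]; simp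
  have hIndInt : Integrable ((shell N (1 - δ) (1 + δ)).indicator (fun _ => 2 * δ ^ 2)) volume :=
    (integrable_indicator_iff (shell_meas _ _ _)).2 (integrableOn_const (shell_fin _ _ _))
  refine (integral_mono_of_nonneg (ae_of_all _ fun ξ => by positivity) hIndInt
    (ae_of_all _ hpt)).trans ?_
  rw [integral_indicator (shell_meas _ _ _), setIntegral_const, smul_eq_mul, Measure.real,
    shell_vol (by linarith) (by linarith), mul_comm]
  have h := abs_pow_sub_pow_le (1 + δ) (1 - δ) N
  have h1 : |(1 + δ) - (1 - δ)| = 2 * δ := by rw [abs_of_nonneg] <;> linarith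
  have h2 : max |1 + δ| |1 - δ| ≤ 2 := by
    refine max_le ?_ ?_ <;> rw [abs_le] <;> constructor <;> linarith
  have h3 : (1 + δ) ^ N - (1 - δ) ^ N ≤ 2 * δ * N * 2 ^ (N - 1) := by
    refine (le_abs_self _).trans (h.trans ?_)
    rw [h1]
    gcongr
  gcongr

lemma fS_four {N : ℕ} (hN : 1 ≤ N) {δ : ℝ} (hδ : 0 < δ) (hδ1 : δ ≤ 1 / 2) {x : Esp N}
    (hx : ‖x‖ ≤ 1 / 2) :
    δ * (V0 N / (2 * Real.pi) ^ N / 16) ≤ ‖𝓕 (fS N hδ hδ1) x‖ := by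
  have hV := V0_pos N
  have hN0 : N ≠ 0 := by omega
  set f := fS N hδ hδ1
  have hfi : Integrable (fun v => Complex.exp (↑(-2 * Real.pi * inner ℝ v x) * Complex.I) • f v)
      volume := by
    refine (f.integrable (μ := volume)).norm.mono' ?_ (ae_of_all _ fun v => ?_)
    · refine Continuous.aestronglyMeasurable ?_
      have := f.continuous
      fun_prop
    · rw [norm_smul, Complex.norm_exp_ofReal_mul_I, one_mul]
  have h1 : (𝓕 f x).re = ∫ v, Real.cos (2 * Real.pi * inner ℝ v x) * prof δ (‖v‖ ^ 2) := by
    rw [SchwartzMap.fourier_coe, Real.fourier_eq']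
    have := Complex.reCLM.integral_comp_comm hfi
    simp only [Complex.reCLM_apply] at this
    rw [← this]
    refine integral_congr_ae (ae_of_all _ fun v => ?_)
    simp only [f, fS_apply, smul_eq_mul, Complex.re_mul_ofReal, Complex.exp_ofReal_mul_I_re]
    congr 1
    rw [← Real.cos_neg]; congr 1; ring
  have hri : Integrable (fun v : Esp N => Real.cos (2 * Real.pi * inner ℝ v x) * prof δ (‖v‖ ^ 2))
      volume := by
    refine (f.integrable (μ := volume)).norm.mono' ?_ (ae_of_all _ fun v => ?_)
    · refine Continuous.aestronglyMeasurable ?_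
      have h1 : Continuous (prof δ) := chi.continuous.comp (by fun_prop)
      fun_prop
    · simp only [f, fS_apply]
      rw [norm_mul, Complex.norm_real]
      exact mul_le_of_le_one_left (norm_nonneg _) (Real.abs_cos_le_one _)
  have hpt : ∀ v : Esp N, (shell N 1 (1 + δ / 8)).indicator (fun _ => (1 / 2 : ℝ)) v
      ≤ Real.cos (2 * Real.pi * inner ℝ v x) * prof δ (‖v‖ ^ 2) := by
    intro v
    have hc : v ∈ shell N (1 - δ) (1 + δ) → 1 / 2 ≤ Real.cos (2 * Real.pi * inner ℝ v x) := by
      intro hv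
      rw [shell_mem] at hv
      have h1 : |2 * Real.pi * inner ℝ v x| ≤ 1 := by
        rw [abs_mul, abs_of_pos (by positivity : 0 < 2 * Real.pi)]
        have h2 := abs_real_inner_le_norm v x
        calc 2 * Real.pi * |inner ℝ v x| ≤ 2 * Real.pi * (‖v‖ * ‖x‖) := by gcongr
          _ = (2 * Real.pi * ‖v‖) * ‖x‖ := by ring
          _ ≤ 2 * (1 / 2) := by gcongr; linarith
          _ = 1 := by norm_num
      have h2 := Real.one_sub_sq_div_two_le_cos (x := 2 * Real.pi * inner ℝ v x)
      have h3 : (2 * Real.pi * inner ℝ v x) ^ 2 ≤ 1 := by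
        rw [← sq_abs]; exact pow_le_one₀ (abs_nonneg _) h1
      linarith
    by_cases hv : v ∈ shell N (1 - δ) (1 + δ)
    · by_cases hv' : v ∈ shell N 1 (1 + δ / 8)
      · rw [Set.indicator_of_mem hv', prof_one hδ hδ1 hv', mul_one]
        exact hc hv
      · rw [Set.indicator_of_notMem hv']
        exact mul_nonneg (by linarith [hc hv]) (prof_nonneg _ _)
    · have hv' : v ∉ shell N 1 (1 + δ / 8) := by
        intro h
        apply hv
        rw [shell_mem] at h ⊢
        constructor <;> linarith [h.1, h.2]
      rw [Set.indicator_of_notMem hv', prof_zero hδ hδ1 hv, mul_zero]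
  have hIndInt : Integrable ((shell N 1 (1 + δ / 8)).indicator (fun _ => (1 / 2 : ℝ))) volume :=
    (integrable_indicator_iff (shell_meas _ _ _)).2 (integrableOn_const (shell_fin _ _ _))
  have h2 := integral_mono hIndInt hri hpt
  rw [← h1, integral_indicator (shell_meas _ _ _), setIntegral_const, smul_eq_mul, Measure.real,
    shell_vol (by norm_num) (by linarith), one_pow] at h2
  refine le_trans ?_ (h2.trans ((le_abs_self _).trans (Complex.abs_re_le_norm _)))
  have h3 : δ / 8 ≤ (1 + δ / 8) ^ N - 1 := by
    have := le_self_pow₀ (by linarith : 1 ≤ 1 + δ / 8) hN0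
    linarith
  calc δ * (V0 N / (2 * Real.pi) ^ N / 16)
      = (δ / 8) * (V0 N / (2 * Real.pi) ^ N) * (1 / 2) := by ring
    _ ≤ _ := by gcongr

lemma fS_p {N : ℕ} (hN : 1 ≤ N) {σ : ℝ} (hσ : 0 < σ) {δ : ℝ} (hδ : 0 < δ) (hδ1 : δ ≤ 1 / 2) :
    (δ * (V0 N / (2 * Real.pi) ^ N / 16 * ((1 / 2) ^ N * V0 N) ^ (2 * σ + 2)⁻¹)) ^ (2 * σ + 2)
      ≤ ∫ x, ‖𝓕 (fS N hδ hδ1) x‖ ^ (2 * σ + 2) := by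
  have hV := V0_pos N
  have hp : 0 < 2 * σ + 2 := by linarith
  set f := fS N hδ hδ1
  set A := δ * (V0 N / (2 * Real.pi) ^ N / 16)
  have hA : 0 < A := by positivity
  have hIndInt : Integrable (fun x => ‖𝓕 f x‖ ^ (2 * σ + 2)) volume := by
    have := ((𝓕 f).memLp (ENNReal.ofReal (2 * σ + 2)) volume).integrable_norm_rpow
      (by simpa using hp) (by simp)
    rwa [ENNReal.toReal_ofReal hp.le] at this
  have hfin : volume (Metric.closedBall (0 : Esp N) (1 / 2)) ≠ ⊤ := measure_closedBall_lt_top.ne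
  have hm : MeasurableSet (Metric.closedBall (0 : Esp N) (1 / 2)) :=
    Metric.isClosed_closedBall.measurableSet
  have h := integral_mono (f := (Metric.closedBall (0 : Esp N) (1 / 2)).indicator
      (fun _ => A ^ (2 * σ + 2))) ((integrable_indicator_iff hm).2 (integrableOn_const hfin)) hIndInt
    (fun x => by
      by_cases hx : x ∈ Metric.closedBall (0 : Esp N) (1 / 2)
      · rw [Set.indicator_of_mem hx]
        have := fS_four hN hδ hδ1 (x := x) (by simpa using hx)
        simp only
        gcongr
      · rw [Set.indicator_of_notMem hx]; positivity)
  rw [integral_indicator hm, setIntegral_const, smul_eq_mul, Measure.real,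
    vol_cball N (by norm_num), ENNReal.toReal_ofReal (by positivity)] at h
  refine le_trans (le_of_eq ?_) h
  rw [← mul_assoc, Real.mul_rpow hA.le (by positivity), Real.rpow_inv_rpow (by positivity) hp.ne',
    mul_comm]

lemma test_bound {N : ℕ} (hN : 1 ≤ N) {σ : ℝ} (hσ : 0 < σ) : ∃ C : ℝ, 0 < C ∧ ∀ c : ℝ, 0 < c →
    c < 1 / 4 → ∃ U : H2 N, U.pPow σ = 1 ∧ Tfun c U ≤ C * Real.sqrt c := by
  have hV := V0_pos N
  set A := 2 * N * 2 ^ (N - 1) * (V0 N / (2 * Real.pi) ^ N)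
  set B := V0 N / (2 * Real.pi) ^ N / 16 * ((1 / 2) ^ N * V0 N) ^ (2 * σ + 2)⁻¹
  have hN' : (0 : ℝ) < N := by exact_mod_cast hN
  have hA : 0 < A := by positivity
  have hB : 0 < B := by positivity
  refine ⟨2 * A / B ^ 2, by positivity, fun c hc hc1 => ?_⟩
  have hδ : 0 < Real.sqrt c := by positivity
  have hδ1 : Real.sqrt c ≤ 1 / 2 := by
    rw [Real.sqrt_le_left (by norm_num)]; linarith
  have hsq : Real.sqrt c ^ 2 = c := Real.sq_sqrt hc.le
  obtain ⟨U, hU, hT⟩ := exists_test hσ (Real.sqrt c ^ 2) (fS N hδ hδ1) (P := Real.sqrt c * B)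
    (by positivity) (fS_p hN hσ hδ hδ1) (fS_T hδ hδ1) (by positivity)
  refine ⟨U, hU, ?_⟩
  rw [hsq] at hT
  refine hT.trans (le_of_eq ?_)
  rw [← hsq]
  simp only [Real.sqrt_sq hδ.le, A]
  field_simp

/-- `c ↦ t(c)` is strictly increasing on `(0,∞)`, `t(c) ≤ C√c` for
small `c`, and `t(c) → 0` as `c → 0⁺`. -/
theorem stmt12 (N : ℕ) (σ : ℝ) (hN : 1 ≤ N)
    (hσ : ((N ≤ 4 ∧ 0 < σ) ∨ (5 ≤ N ∧ 0 < σ ∧ σ < 4 / ((N : ℝ) - 4)))) :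
    StrictMonoOn (fun c => tmin N σ c) (Set.Ioi (0 : ℝ)) ∧
    (∃ C : ℝ, 0 < C ∧ ∃ δ : ℝ, 0 < δ ∧ ∀ c : ℝ, 0 < c → c < δ →
      tmin N σ c ≤ C * Real.sqrt c) ∧
    Tendsto (fun c => tmin N σ c) (nhdsWithin 0 (Set.Ioi 0)) (nhds 0) := by
  have hσ0 : 0 < σ := by rcases hσ with h | h <;> [exact h.2; exact h.2.1]
  have hsub : N * σ < 4 * (σ + 1) := by
    rcases hσ with h | h
    · have : (N : ℝ) ≤ 4 := by exact_mod_cast h.1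
      nlinarith
    · have h5 : (5 : ℝ) ≤ N := by exact_mod_cast h.1
      have := h.2.2
      rw [lt_div_iff₀ (by linarith)] at this
      linarith
  obtain ⟨C, hC, hCb⟩ := test_bound hN hσ0
  have hbdd : ∀ c : ℝ, 0 < c → ∀ r ∈ {r : ℝ | ∃ U : H2 N, U.pPow σ = 1 ∧ r = Tfun c U}, 0 ≤ r := by
    rintro c hc r ⟨U, -, rfl⟩
    refine le_trans (mul_nonneg hc.le ?_) (Tfun_ge_mass U c)
    exact integral_nonneg fun x => by positivity
  have hle : ∀ c : ℝ, 0 < c → ∀ U : H2 N, U.pPow σ = 1 → tmin N σ c ≤ Tfun c U :=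
    fun c hc U hU => csInf_le ⟨0, hbdd c hc⟩ ⟨U, hU, rfl⟩
  obtain ⟨U0, hU0, -⟩ := hCb (1 / 8) (by norm_num) (by norm_num)
  have hpos : ∀ c : ℝ, 0 < c → 0 ≤ tmin N σ c := fun c hc =>
    le_csInf ⟨_, U0, hU0, rfl⟩ (hbdd c hc)
  have hsmall : ∀ c : ℝ, 0 < c → c < 1 / 4 → tmin N σ c ≤ C * Real.sqrt c := by
    intro c hc hc1
    obtain ⟨U, hU, hT⟩ := hCb c hc hc1
    exact (hle c hc U hU).trans hT
  refine ⟨?_, ⟨C, hC, 1 / 4, by norm_num, hsmall⟩, ?_⟩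
  · intro c1 hc1 c2 hc2 hlt
    have hc1' : 0 < c1 := hc1
    have hc2' : 0 < c2 := hc2
    obtain ⟨m0, hm0, hm⟩ := mass_lower (N := N) hσ0 hsub ((1 + c2) / c2 * (tmin N σ c2 + 1))
    have hgap : 0 < min 1 ((c2 - c1) * m0) := lt_min one_pos (mul_pos (by linarith) hm0)
    obtain ⟨r, ⟨U, hU, rfl⟩, hr⟩ := exists_lt_of_csInf_lt
      (s := {r : ℝ | ∃ U : H2 N, U.pPow σ = 1 ∧ r = Tfun c2 U}) ⟨_, U0, hU0, rfl⟩
      (show _ < tmin N σ c2 + min 1 ((c2 - c1) * m0) from lt_add_of_pos_right _ hgap)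
    have h1 : Tfun c2 U ≤ tmin N σ c2 + 1 := by linarith [min_le_left 1 ((c2 - c1) * m0)]
    have h2 : U.lapSq ≤ (1 + c2) / c2 * (tmin N σ c2 + 1) := by
      have h3 := (Tfun_ge_lap U hc2').trans h1
      calc U.lapSq = (1 + c2) / c2 * (c2 / (1 + c2) * U.lapSq) := by field_simp
        _ ≤ _ := by gcongr
    have h3 := hm U hU h2
    have h4 := hle c1 hc1' U hU
    have h5 : Tfun c1 U = Tfun c2 U - (c2 - c1) * U.massSq := by unfold Tfun; ring
    have h6 : (c2 - c1) * m0 ≤ (c2 - c1) * U.massSq :=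
      mul_le_mul_of_nonneg_left h3 (by linarith)
    have h7 := min_le_right 1 ((c2 - c1) * m0)
    show tmin N σ c1 < tmin N σ c2
    linarith
  · have hlim : Tendsto (fun c : ℝ => C * Real.sqrt c) (nhdsWithin 0 (Set.Ioi 0)) (nhds 0) := by
      have : Tendsto (fun c : ℝ => C * Real.sqrt c) (nhds 0) (nhds (C * Real.sqrt 0)) :=
        (continuous_const.mul Real.continuous_sqrt).tendsto 0
      simp only [Real.sqrt_zero, mul_zero] at this
      exact this.mono_left nhdsWithin_le_nhds
    refine tendsto_of_tendsto_of_tendsto_of_le_of_le' tendsto_const_nhds hlim ?_ ?_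
    · filter_upwards [self_mem_nhdsWithin] with c hc using hpos c hc
    · filter_upwards [self_mem_nhdsWithin,
        mem_nhdsWithin_of_mem_nhds (gt_mem_nhds (by norm_num : (0 : ℝ) < 1 / 4))] with c hc hc1
      exact hsmall c hc hc1

end
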